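/- Let K and L be infinite countable compact Hausdorff spaces. The following are equivalent: (i) there exists a positive isomorphism from C(K) onto C(L); (ii) C(K) is linearly isomorphic to C(L) and ht(K) ≤ ht(L); (iii) ht(K) ≤ ht(L) < Γ(ht(K)), where Γ(α) denotes the least ordinal of the form ω^β that is greater than or equal to α. -/

import Mathlib

open Ordinal Set

/-- The Cantor–Bendixson derivative of order `o`. -/
noncomputable def cbDeriv (X : Type*) [TopologicalSpace X] : Ordinal.{0} → Set X :=
  fun o => Ordinal.limitRecOn o Set.univ
    (fun _ ih => derivedSet ih)
    (fun o _ ih => ⋂ (β : Ordinal) (h : β < o), ih β h)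

/-- The Cantor–Bendixson height: the least ordinal whose derivative is empty. -/
noncomputable def cbHeight (X : Type*) [TopologicalSpace X] : Ordinal.{0} :=
  sInf {o : Ordinal | cbDeriv X o = ∅}

/-- `Γ(a)`: the least ordinal of the form `ω ^ β` that is `≥ a`. -/
noncomputable def GammaOrd (a : Ordinal.{0}) : Ordinal.{0} :=
  sInf {x : Ordinal | (∃ β : Ordinal, x = ω ^ β) ∧ a ≤ x}

/-! Let `T` be a positive isomorphism and `c > 0` small. Relate `x ∈ K` to `y ∈ L` when
`c * f x ≤ T f y` for all `f ≥ 0`: every `x` is related to some `y`, and every `y` to finitely many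
`x`. Such a closed relation puts `y` in the derivative of order `o` of `L` for some `y` related to
`x` whenever `x` is in that of `K`, so `ht(K) ≤ ht(L)`.

If `T` is any isomorphism, the functionals `f ↦ T f y` are bounded and uniformly separated. When the
derivative of `K` of order `ω ^ δ` is a single point `s`, each further `ω ^ δ` derivatives of `L`
lower by a fixed amount the values of these functionals on the `f` in the unit ball with `f s = 0`
(Bessaga and Pełczyński), so finitely many such steps exhaust `L`; hence `ht(L) < Γ(ht(K))`.

Conversely, let `Z` be a derivative of `L`, and glue `L / Z` to a point of `Z`. The resulting wedge
has a positive isomorphism from its function space onto `C(L)`; if `ht(L) < Γ(ht(K))`, iterating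
lowers the height of `L` to `ht(K)` and makes the top derivative a point. If `Z` is finite, there is
also a positive isomorphism in the opposite direction, which makes the top derivative of `K` a
point, and the Mazurkiewicz–Sierpiński theorem identifies the two spaces. -/

open Topology Filter

section CantorBendixson

universe u v

variable {X : Type u} {Y : Type v} [TopologicalSpace X] [TopologicalSpace Y]

lemma derivedSet_preimage_of_isEmbedding {j : X → Y} (hj : IsEmbedding j) (B : Set Y) :
    derivedSet (j ⁻¹' B) = j ⁻¹' derivedSet (B ∩ range j) := by
  ext x
  rw [mem_preimage, mem_derivedSet, mem_derivedSet, accPt_iff_nhds, accPt_iff_nhds]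
  constructor
  · intro h V hV
    obtain ⟨y, ⟨hyV, hyB⟩, hne⟩ := h (j ⁻¹' V) (hj.continuous.continuousAt hV)
    exact ⟨j y, ⟨hyV, hyB, mem_range_self y⟩, hj.injective.ne hne⟩
  · intro h U hU
    obtain ⟨V, hV, hVU⟩ := (hj.isInducing.nhds_eq_comap x ▸ hU : U ∈ comap j (𝓝 (j x)))
    obtain ⟨_, ⟨hzV, hzB, z, rfl⟩, hne⟩ := h V hV
    exact ⟨z, ⟨hVU hzV, hzB⟩, fun e ↦ hne (congrArg j e)⟩

lemma derivedSet_preimage_of_isOpenEmbedding {j : X → Y} (hj : IsOpenEmbedding j) (B : Set Y) :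
    derivedSet (j ⁻¹' B) = j ⁻¹' derivedSet B := by
  ext x
  rw [mem_preimage, mem_derivedSet, mem_derivedSet, ← comap_principal, hj.accPt_comap_iff]

lemma cbDeriv_zero : cbDeriv X 0 = Set.univ := by simp [cbDeriv]

lemma cbDeriv_add_one (o : Ordinal) : cbDeriv X (o + 1) = derivedSet (cbDeriv X o) := by
  rw [cbDeriv, Ordinal.limitRecOn_add_one, cbDeriv]

lemma cbDeriv_one : cbDeriv X 1 = derivedSet Set.univ := by
  rw [← zero_add 1, cbDeriv_add_one, cbDeriv_zero]

lemma cbDeriv_of_isSuccLimit {o : Ordinal} (ho : Order.IsSuccLimit o) :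
    cbDeriv X o = ⋂ β < o, cbDeriv X β := by
  rw [cbDeriv, Ordinal.limitRecOn_limit _ _ _ _ ho]
  rfl

lemma mem_cbDeriv_of_isSuccLimit {o : Ordinal} (ho : Order.IsSuccLimit o) {x : X} :
    x ∈ cbDeriv X o ↔ ∀ β < o, x ∈ cbDeriv X β := by
  rw [cbDeriv_of_isSuccLimit ho, mem_iInter₂]

lemma isClosed_cbDeriv [T1Space X] (o : Ordinal) : IsClosed (cbDeriv X o) := by
  induction o using Ordinal.limitRecOn with
  | zero => simp only [cbDeriv_zero, isClosed_univ]
  | add_one o _ => exact cbDeriv_add_one (X := X) o ▸ isClosed_derivedSet _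
  | limit o ho ih => exact cbDeriv_of_isSuccLimit (X := X) ho ▸ isClosed_biInter ih

lemma cbDeriv_antitone [T1Space X] : Antitone (cbDeriv X) := by
  intro a b hab
  induction b using Ordinal.limitRecOn with
  | zero => rw [nonpos_iff_eq_zero.1 hab]
  | add_one o ih =>
    rcases hab.lt_or_eq with h | rfl
    · rw [cbDeriv_add_one]
      exact ((isClosed_iff_derivedSet_subset _).1 (isClosed_cbDeriv o)).trans
        (ih (Order.lt_add_one_iff.1 h))
    · exact subset_rfl
  | limit o ho _ =>
    rcases hab.lt_or_eq with h | rfl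
    · exact fun x hx ↦ (mem_cbDeriv_of_isSuccLimit ho).1 hx a h
    · exact subset_rfl

lemma cbDeriv_eq_preimage_of_isOpenEmbedding {j : X → Y} (hj : IsOpenEmbedding j) (o : Ordinal) :
    cbDeriv X o = j ⁻¹' cbDeriv Y o := by
  induction o using Ordinal.limitRecOn with
  | zero => simp only [cbDeriv_zero, preimage_univ]
  | add_one o ih =>
    rw [cbDeriv_add_one, cbDeriv_add_one, ih, derivedSet_preimage_of_isOpenEmbedding hj]
  | limit o ho ih =>
    simp only [cbDeriv_of_isSuccLimit ho, preimage_iInter]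
    exact iInter₂_congr ih

lemma mem_cbDeriv_iff_of_isOpenEmbedding {j : X → Y} (hj : IsOpenEmbedding j) {o : Ordinal}
    {x : X} : x ∈ cbDeriv X o ↔ j x ∈ cbDeriv Y o := by
  rw [cbDeriv_eq_preimage_of_isOpenEmbedding hj, mem_preimage]

lemma cbDeriv_cbDeriv [T1Space X] (a o : Ordinal) :
    cbDeriv (cbDeriv X a) o = Subtype.val ⁻¹' cbDeriv X (a + o) := by
  induction o using Ordinal.limitRecOn with
  | zero => simp only [cbDeriv_zero, add_zero, Subtype.coe_preimage_self]
  | add_one o ih =>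
    have hsub : cbDeriv X (a + o) ⊆ cbDeriv X a := cbDeriv_antitone le_self_add
    rw [cbDeriv_add_one, ih, derivedSet_preimage_of_isEmbedding IsEmbedding.subtypeVal,
      Subtype.range_coe, inter_eq_left.2 hsub, ← cbDeriv_add_one, add_assoc]
  | limit o ho ih =>
    ext x
    rw [mem_cbDeriv_of_isSuccLimit ho, mem_preimage,
      mem_cbDeriv_of_isSuccLimit (Ordinal.isSuccLimit_add a ho)]
    constructor
    · intro h b hb
      rcases le_total b a with hba | hab
      · exact cbDeriv_antitone hba x.2
      · obtain ⟨c, rfl⟩ := exists_add_of_le hab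
        have hc : c < o := (add_lt_add_iff_left a).1 hb
        exact (ih c hc ▸ h c hc : x ∈ Subtype.val ⁻¹' cbDeriv X (a + c))
    · intro h b hb
      rw [ih b hb]
      exact h _ ((add_lt_add_iff_left a).2 hb)

lemma mem_cbDeriv_cbDeriv [T1Space X] {a o : Ordinal} {x : cbDeriv X a} :
    x ∈ cbDeriv (cbDeriv X a) o ↔ (x : X) ∈ cbDeriv X (a + o) := by
  rw [cbDeriv_cbDeriv, mem_preimage]

lemma mem_cbDeriv_one {x : X} : x ∈ cbDeriv X 1 ↔ ¬IsOpen ({x} : Set X) := by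
  rw [cbDeriv_one, mem_derivedSet, isOpen_singleton_iff_punctured_nhds, AccPt, principal_univ,
    inf_top_eq, neBot_iff]

lemma disjoint_cbDeriv_add [T1Space X] {a o : Ordinal} {U : Set X} (hU : IsOpen U)
    (h : cbDeriv (Subtype.val ⁻¹' U : Set (cbDeriv X a)) o = ∅) :
    Disjoint U (cbDeriv X (a + o)) := by
  refine disjoint_left.2 fun x hxU hx ↦ ?_
  have hxa : x ∈ cbDeriv X a := cbDeriv_antitone le_self_add hx
  have hV : IsOpen (Subtype.val ⁻¹' U : Set (cbDeriv X a)) := hU.preimage continuous_subtype_val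
  exact h.le ((mem_cbDeriv_iff_of_isOpenEmbedding hV.isOpenEmbedding_subtypeVal
    (x := ⟨⟨x, hxa⟩, hxU⟩)).2 (mem_cbDeriv_cbDeriv.2 hx))

lemma derivedSet_eq_empty_of_finite [T1Space X] {s : Set X} (hs : s.Finite) : derivedSet s = ∅ :=
  eq_empty_of_forall_notMem fun _ hx ↦ Set.Infinite.of_accPt hx hs

lemma finite_of_derivedSet_eq_empty [CompactSpace X] {s : Set X} (hs : derivedSet s = ∅) :
    s.Finite := by
  by_contra h
  obtain ⟨x, hx⟩ := Set.Infinite.exists_accPt_principal h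
  exact hs.le hx

end CantorBendixson

section CountableCompact

universe u

variable {X : Type u} [TopologicalSpace X]

lemma dense_setOf_isOpen_singleton [BaireSpace X] [T1Space X] [Countable X] :
    Dense {x : X | IsOpen ({x} : Set X)} := by
  have hdense : Dense (⋃ x : X, interior {x}) :=
    dense_iUnion_interior_of_closed (fun _ ↦ isClosed_singleton) (iUnion_of_singleton X)
  refine hdense.mono (iUnion_subset fun x y hy ↦ ?_)
  obtain rfl : y = x := mem_singleton_iff.1 (interior_subset hy)
  exact subset_interior_iff_isOpen.1 (singleton_subset_iff.2 hy)

variable [CompactSpace X]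

instance [T1Space X] (o : Ordinal) : CompactSpace (cbDeriv X o) :=
  isCompact_iff_compactSpace.1 (isClosed_cbDeriv o).isCompact

lemma nonempty_cbDeriv_of_isSuccLimit [T1Space X] {o : Ordinal} (ho : Order.IsSuccLimit o)
    (h : ∀ b < o, (cbDeriv X b).Nonempty) : (cbDeriv X o).Nonempty := by
  have : Nonempty (Iio o) := ⟨⟨0, bot_lt_iff_ne_bot.2 ho.ne_bot⟩⟩
  have hInter : ⋂ b < o, cbDeriv X b = ⋂ b : Iio o, cbDeriv X b := biInter_eq_iInter (Iio o) _
  rw [cbDeriv_of_isSuccLimit ho, hInter]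
  exact IsCompact.nonempty_iInter_of_directed_nonempty_isCompact_isClosed
    (fun b : Iio o ↦ cbDeriv X b.1)
    (directed_of_isDirected_le fun _ _ hab ↦ cbDeriv_antitone hab) (fun b ↦ h b.1 b.2)
    (fun _ ↦ (isClosed_cbDeriv _).isCompact) (fun _ ↦ isClosed_cbDeriv _)

variable [T2Space X] [Countable X]

lemma exists_mem_cbDeriv_diff_of_mem_nhds {x : X} {o : Ordinal} (hx : x ∈ cbDeriv X o)
    {U : Set X} (hU : U ∈ 𝓝 x) : ∃ y ∈ U, y ∈ cbDeriv X o \ cbDeriv X (o + 1) := by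
  obtain ⟨y, hyU, hy⟩ := (dense_setOf_isOpen_singleton (X := cbDeriv X o)).inter_nhds_nonempty
    (continuous_subtype_val.continuousAt hU : Subtype.val ⁻¹' U ∈ 𝓝 (⟨x, hx⟩ : cbDeriv X o))
  exact ⟨y, hy, y.2, fun h ↦ mem_cbDeriv_one.1 (mem_cbDeriv_cbDeriv.2 h) hyU⟩

variable (X) in
lemma exists_cbDeriv_eq_empty : ∃ o, cbDeriv X o = ∅ := by
  by_contra! h
  have (o : Ordinal) : ∃ x, x ∈ cbDeriv X o \ cbDeriv X (o + 1) := by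
    obtain ⟨x, hx⟩ := h o
    obtain ⟨y, -, hy⟩ := exists_mem_cbDeriv_diff_of_mem_nhds hx univ_mem
    exact ⟨y, hy⟩
  choose f hf using this
  refine not_injective_of_ordinal.{0} f (.of_lt_imp_ne fun a b hab e ↦ (hf a).2 ?_)
  exact e ▸ cbDeriv_antitone (Order.add_one_le_of_lt hab) (hf b).1

lemma exists_mem_cbDeriv_diff (x : X) : ∃ o, x ∈ cbDeriv X o \ cbDeriv X (o + 1) := by
  by_contra! h
  obtain ⟨o, ho⟩ := exists_cbDeriv_eq_empty X
  have hx (o : Ordinal) : x ∈ cbDeriv X o := by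
    induction o using Ordinal.limitRecOn with
    | zero => exact cbDeriv_zero.ge (mem_univ x)
    | add_one o ih => exact of_not_not fun hx ↦ h o ⟨ih, hx⟩
    | limit o ho ih => exact (mem_cbDeriv_of_isSuccLimit ho).2 ih
  exact ho.le (hx o)

lemma cbDeriv_eq_empty_iff {o : Ordinal} : cbDeriv X o = ∅ ↔ cbHeight X ≤ o := by
  refine ⟨fun h ↦ csInf_le' h, fun h ↦ subset_empty_iff.1 ((cbDeriv_antitone h).trans ?_)⟩
  exact (csInf_mem (exists_cbDeriv_eq_empty X) : cbDeriv X (cbHeight X) = ∅).subset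

lemma nonempty_cbDeriv_iff {o : Ordinal} : (cbDeriv X o).Nonempty ↔ o < cbHeight X := by
  rw [nonempty_iff_ne_empty, ne_eq, cbDeriv_eq_empty_iff, not_le]

lemma cbHeight_lt_of_isSuccLimit {o : Ordinal} (ho : Order.IsSuccLimit o) (h : cbHeight X ≤ o) :
    cbHeight X < o := by
  by_contra! hle
  obtain ⟨x, hx⟩ := nonempty_cbDeriv_of_isSuccLimit ho fun b hb ↦
    nonempty_cbDeriv_iff.2 (hb.trans_le hle)
  exact (cbDeriv_eq_empty_iff.2 h).le hx

variable (X) in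
lemma exists_cbHeight_eq_add_one [Nonempty X] :
    ∃ a, cbHeight X = a + 1 ∧ (cbDeriv X a).Nonempty ∧ (cbDeriv X a).Finite := by
  have hempty : cbDeriv X (cbHeight X) = ∅ := cbDeriv_eq_empty_iff.2 le_rfl
  rcases Ordinal.zero_or_succ_or_isSuccLimit (cbHeight X) with h | ⟨a, h⟩ | h
  · rw [h, cbDeriv_zero] at hempty
    exact (univ_nonempty.ne_empty hempty).elim
  · rw [Order.succ_eq_add_one] at h
    rw [← h, cbDeriv_add_one] at hempty
    exact ⟨a, h.symm, nonempty_cbDeriv_iff.2 (h ▸ lt_add_one a),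
      finite_of_derivedSet_eq_empty hempty⟩
  · have := nonempty_cbDeriv_of_isSuccLimit h fun b hb ↦ nonempty_cbDeriv_iff.2 hb
    exact (this.ne_empty hempty).elim

lemma exists_isClopen_subset_of_mem_nhds {x : X} {U : Set X} (hU : U ∈ 𝓝 x) :
    ∃ V, IsClopen V ∧ x ∈ V ∧ V ⊆ U := by
  obtain ⟨W, hWU, hW, hxW⟩ := mem_nhds_iff.1 hU
  obtain ⟨V, hV, hxV, hVW⟩ := compact_exists_isClopen_in_isOpen hW hxW
  exact ⟨V, hV, hxV, hVW.trans hWU⟩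

lemma exists_isClopen_cbDeriv_eq_singleton {x : X} {r : Ordinal}
    (hx : x ∈ cbDeriv X r \ cbDeriv X (r + 1)) {N : Set X} (hN : N ∈ 𝓝 x) :
    ∃ A, IsClopen A ∧ A ⊆ N ∧ ∃ hxA : x ∈ A, cbDeriv A r = {⟨x, hxA⟩} := by
  have hiso : ∃ V ∈ 𝓝 x, ∀ y ∈ V, y ∈ cbDeriv X r → y = x := by
    have := hx.2
    rw [cbDeriv_add_one, mem_derivedSet, accPt_iff_nhds] at this
    push Not at this
    exact this.imp fun V hV ↦ ⟨hV.1, fun y hyV hy ↦ hV.2 y ⟨hyV, hy⟩⟩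
  obtain ⟨V, hV, hVx⟩ := hiso
  obtain ⟨A, hA, hxA, hAsub⟩ := exists_isClopen_subset_of_mem_nhds (inter_mem hN hV)
  refine ⟨A, hA, hAsub.trans inter_subset_left, hxA, ?_⟩
  rw [cbDeriv_eq_preimage_of_isOpenEmbedding hA.isOpen.isOpenEmbedding_subtypeVal]
  ext y
  rw [mem_preimage, mem_singleton_iff, Subtype.ext_iff]
  exact ⟨hVx y (hAsub y.2).2, fun h ↦ h ▸ hx.1⟩

end CountableCompact

section MazurkiewiczSierpinski

universe u v

lemma nonempty_homeomorph_of_bijOn_graph {X : Type u} {Y : Type v} [TopologicalSpace X]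
    [TopologicalSpace Y] [CompactSpace X] [CompactSpace Y] [T2Space X] [T2Space Y]
    {R : Set (X × Y)} (hR : IsClosed R) (hX : BijOn Prod.fst R Set.univ)
    (hY : BijOn Prod.snd R Set.univ) : Nonempty (X ≃ₜ Y) := by
  have : CompactSpace R := isCompact_iff_compactSpace.1 hR.isCompact
  have hfst : IsHomeomorph (R.domRestrict Prod.fst) := isHomeomorph_iff_continuous_bijective.2
    ⟨continuous_fst.comp continuous_subtype_val, injOn_iff_injective.1 hX.injOn,
      surjOn_iff_surjective.1 hX.surjOn⟩
  have hsnd : IsHomeomorph (R.domRestrict Prod.snd) := isHomeomorph_iff_continuous_bijective.2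
    ⟨continuous_snd.comp continuous_subtype_val, injOn_iff_injective.1 hY.injOn,
      surjOn_iff_surjective.1 hY.surjOn⟩
  exact ⟨(hfst.homeomorph _).symm.trans (hsnd.homeomorph _)⟩

/-- `G` is the graph of a homeomorphism between a clopen subset of `X \ {s}` and a clopen subset of
`Y \ {t}`, for compact Hausdorff `X` and `Y`; these graphs are the partial isomorphisms of the
back-and-forth argument that matches `X` and `Y`. -/
structure IsPartialGraph {X : Type u} {Y : Type v} [TopologicalSpace X] [TopologicalSpace Y]
    (s : X) (t : Y) (G : Set (X × Y)) : Prop where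
  isClosed : IsClosed G
  injOn_fst : InjOn Prod.fst G
  injOn_snd : InjOn Prod.snd G
  isOpen_image_fst : IsOpen (Prod.fst '' G)
  isOpen_image_snd : IsOpen (Prod.snd '' G)
  notMem_image_fst : s ∉ Prod.fst '' G
  notMem_image_snd : t ∉ Prod.snd '' G

namespace IsPartialGraph

variable {X : Type u} {Y : Type v} [TopologicalSpace X] [TopologicalSpace Y] {s : X} {t : Y}
  {G G' : Set (X × Y)}

variable (s t) in
lemma empty : IsPartialGraph s t ∅ := by
  constructor <;> simp

lemma swap (hG : IsPartialGraph s t G) : IsPartialGraph t s (Prod.swap '' G) where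
  isClosed := (Homeomorph.prodComm X Y).isClosedMap G hG.isClosed
  injOn_fst := hG.injOn_snd.image_of_comp (g := Prod.fst) (f := Prod.swap)
  injOn_snd := hG.injOn_fst.image_of_comp (g := Prod.snd) (f := Prod.swap)
  isOpen_image_fst := image_image Prod.fst Prod.swap G ▸ hG.isOpen_image_snd
  isOpen_image_snd := image_image Prod.snd Prod.swap G ▸ hG.isOpen_image_fst
  notMem_image_fst := image_image Prod.fst Prod.swap G ▸ hG.notMem_image_snd
  notMem_image_snd := image_image Prod.snd Prod.swap G ▸ hG.notMem_image_fst

lemma union (hG : IsPartialGraph s t G) (hG' : IsPartialGraph s t G')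
    (hfst : Disjoint (Prod.fst '' G) (Prod.fst '' G'))
    (hsnd : Disjoint (Prod.snd '' G) (Prod.snd '' G')) : IsPartialGraph s t (G ∪ G') where
  isClosed := hG.isClosed.union hG'.isClosed
  injOn_fst := (injOn_union (Disjoint.of_image hfst)).2 ⟨hG.injOn_fst, hG'.injOn_fst,
    fun _ hx _ hy ↦ hfst.ne_of_mem (mem_image_of_mem _ hx) (mem_image_of_mem _ hy)⟩
  injOn_snd := (injOn_union (Disjoint.of_image hsnd)).2 ⟨hG.injOn_snd, hG'.injOn_snd,
    fun _ hx _ hy ↦ hsnd.ne_of_mem (mem_image_of_mem _ hx) (mem_image_of_mem _ hy)⟩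
  isOpen_image_fst := image_union .. ▸ hG.isOpen_image_fst.union hG'.isOpen_image_fst
  isOpen_image_snd := image_union .. ▸ hG.isOpen_image_snd.union hG'.isOpen_image_snd
  notMem_image_fst := by
    rw [image_union]
    exact fun h ↦ h.elim hG.notMem_image_fst hG'.notMem_image_fst
  notMem_image_snd := by
    rw [image_union]
    exact fun h ↦ h.elim hG.notMem_image_snd hG'.notMem_image_snd

lemma exists_of_homeomorph [CompactSpace X] [T2Space X] [T2Space Y] {A : Set X} {B : Set Y}
    (hA : IsClopen A) (hB : IsOpen B) (e : A ≃ₜ B) (hs : s ∉ A) (ht : t ∉ B) :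
    ∃ E, IsPartialGraph s t E ∧ Prod.fst '' E = A ∧ Prod.snd '' E = B := by
  have : CompactSpace A := isCompact_iff_compactSpace.1 hA.isClosed.isCompact
  set E : Set (X × Y) := range fun z : A ↦ ((z : X), (e z : Y))
  have hfst : Prod.fst '' E = A := by
    rw [← range_comp]
    exact Subtype.range_coe
  have hsnd : Prod.snd '' E = B := by
    rw [← range_comp]
    exact (e.surjective.range_comp Subtype.val).trans Subtype.range_coe
  refine ⟨E, ⟨(isCompact_range (by fun_prop)).isClosed, ?_, ?_, hfst ▸ hA.isOpen, hsnd ▸ hB,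
    hfst ▸ hs, hsnd ▸ ht⟩, hfst, hsnd⟩
  · rintro _ ⟨z, rfl⟩ _ ⟨w, rfl⟩ h
    rw [Subtype.ext h]
  · rintro _ ⟨z, rfl⟩ _ ⟨w, rfl⟩ h
    rw [e.injective (Subtype.ext h)]

variable {ι : Type*} {H : ι → Set (X × Y)}

lemma isClosed_insert_iUnion (hH : ∀ i, IsPartialGraph s t (H i)) (hdir : Directed (· ⊆ ·) H)
    (hX : ∀ x ≠ s, ∃ i, x ∈ Prod.fst '' H i) (hY : ∀ y ≠ t, ∃ i, y ∈ Prod.snd '' H i) :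
    IsClosed (insert (s, t) (⋃ i, H i)) := by
  rw [← isOpen_compl_iff, isOpen_iff_mem_nhds]
  rintro ⟨x, y⟩ hxy
  obtain ⟨hne, hnot⟩ : (x, y) ≠ (s, t) ∧ (x, y) ∉ ⋃ i, H i := by simpa using hxy
  have hnot (i) : (x, y) ∉ H i := fun h ↦ hnot (mem_iUnion_of_mem i h)
  rcases ne_or_eq x s with hx | rfl
  · obtain ⟨i, hi⟩ := hX x hx
    filter_upwards [((hH i).isOpen_image_fst.preimage continuous_fst).mem_nhds hi,
      (hH i).isClosed.isOpen_compl.mem_nhds (hnot i)]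
    rintro p ⟨q, hq, hqp⟩ hp (rfl | hpU)
    · exact (hH i).notMem_image_fst ⟨q, hq, hqp⟩
    · have hinj := inj_on_iUnion_of_directed hdir fun j ↦ (hH j).injOn_fst
      exact hp (hinj (mem_iUnion_of_mem i hq) hpU hqp ▸ hq)
  · obtain ⟨i, hi⟩ := hY y fun h ↦ hne (by rw [h])
    filter_upwards [((hH i).isOpen_image_snd.preimage continuous_snd).mem_nhds hi,
      (hH i).isClosed.isOpen_compl.mem_nhds (hnot i)]
    rintro p ⟨q, hq, hqp⟩ hp (rfl | hpU)
    · exact (hH i).notMem_image_snd ⟨q, hq, hqp⟩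
    · have hinj := inj_on_iUnion_of_directed hdir fun j ↦ (hH j).injOn_snd
      exact hp (hinj (mem_iUnion_of_mem i hq) hpU hqp ▸ hq)

lemma bijOn_fst_insert_iUnion (hH : ∀ i, IsPartialGraph s t (H i)) (hdir : Directed (· ⊆ ·) H)
    (hX : ∀ x ≠ s, ∃ i, x ∈ Prod.fst '' H i) :
    BijOn Prod.fst (insert (s, t) (⋃ i, H i)) Set.univ := by
  have hs : s ∉ Prod.fst '' ⋃ i, H i := by
    rw [image_iUnion, mem_iUnion]
    exact fun ⟨i, hi⟩ ↦ (hH i).notMem_image_fst hi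
  refine ⟨mapsTo_univ _ _, (injOn_insert fun h ↦ hs (mem_image_of_mem _ h)).2
    ⟨inj_on_iUnion_of_directed hdir fun i ↦ (hH i).injOn_fst, hs⟩, fun x _ ↦ ?_⟩
  rcases ne_or_eq x s with hx | rfl
  · obtain ⟨i, p, hp, rfl⟩ := hX x hx
    exact mem_image_of_mem _ (mem_insert_of_mem _ (mem_iUnion_of_mem i hp))
  · exact mem_image_of_mem Prod.fst (mem_insert _ _)

lemma bijOn_snd_insert_iUnion (hH : ∀ i, IsPartialGraph s t (H i)) (hdir : Directed (· ⊆ ·) H)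
    (hY : ∀ y ≠ t, ∃ i, y ∈ Prod.snd '' H i) :
    BijOn Prod.snd (insert (s, t) (⋃ i, H i)) Set.univ := by
  have hbij : BijOn Prod.fst (insert (t, s) (⋃ i, Prod.swap '' H i)) Set.univ :=
    bijOn_fst_insert_iUnion (fun i ↦ (hH i).swap)
      (hdir.mono_comp (g := image Prod.swap) _ fun _ _ h ↦ image_mono h)
      fun y hy ↦ (hY y hy).imp fun i hi ↦ by rwa [image_image]
  rw [← image_iUnion, ← Prod.swap_prod_mk, ← image_insert_eq] at hbij
  exact hbij.comp Prod.swap_injective.injOn.bijOn_image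

end IsPartialGraph

variable {X : Type u} {Y : Type v} [TopologicalSpace X] [TopologicalSpace Y] [CompactSpace X]
  [CompactSpace Y] [T2Space X] [T2Space Y] [Countable X] [Countable Y] {s : X} {t : Y}

lemma nonempty_homeomorph_of_exists_extension
    (hX : ∀ G, IsPartialGraph s t G → ∀ x ≠ s, ∃ G', IsPartialGraph s t G' ∧ G ⊆ G' ∧
      x ∈ Prod.fst '' G')
    (hY : ∀ G, IsPartialGraph s t G → ∀ y ≠ t, ∃ G', IsPartialGraph s t G' ∧ G ⊆ G' ∧
      y ∈ Prod.snd '' G') : Nonempty (X ≃ₜ Y) := by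
  let P := {G : Set (X × Y) // IsPartialGraph s t G}
  let D : {x // x ≠ s} ⊕ {y // y ≠ t} → Order.Cofinal P := Sum.elim
    (fun x ↦ ⟨{G | x.1 ∈ Prod.fst '' G.1}, fun G ↦
      let ⟨G', hG', hle, hx⟩ := hX G.1 G.2 x.1 x.2; ⟨⟨G', hG'⟩, hx, hle⟩⟩)
    (fun y ↦ ⟨{G | y.1 ∈ Prod.snd '' G.1}, fun G ↦
      let ⟨G', hG', hle, hy⟩ := hY G.1 G.2 y.1 y.2; ⟨⟨G', hG'⟩, hy, hle⟩⟩)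
  let _ := Encodable.ofCountable ({x // x ≠ s} ⊕ {y // y ≠ t})
  let I := Order.idealOfCofinals (⟨∅, .empty s t⟩ : P) D
  let H : I → Set (X × Y) := fun G ↦ G.1.1
  have hH (G) : IsPartialGraph s t (H G) := G.1.2
  have hdir : Directed (· ⊆ ·) H := directedOn_iff_directed.1 I.directed
  have hX' (x) (hx : x ≠ s) : ∃ i, x ∈ Prod.fst '' H i :=
    let ⟨G, hG, hGI⟩ := Order.cofinal_meets_idealOfCofinals _ D (.inl ⟨x, hx⟩); ⟨⟨G, hGI⟩, hG⟩
  have hY' (y) (hy : y ≠ t) : ∃ i, y ∈ Prod.snd '' H i :=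
    let ⟨G, hG, hGI⟩ := Order.cofinal_meets_idealOfCofinals _ D (.inr ⟨y, hy⟩); ⟨⟨G, hGI⟩, hG⟩
  exact nonempty_homeomorph_of_bijOn_graph
    (IsPartialGraph.isClosed_insert_iUnion hH hdir hX' hY')
    (IsPartialGraph.bijOn_fst_insert_iUnion hH hdir hX')
    (IsPartialGraph.bijOn_snd_insert_iUnion hH hdir hY')

lemma IsPartialGraph.exists_extension {a : Ordinal} (hs : cbDeriv X a = {s})
    (ht : cbDeriv Y a = {t})
    (ih : ∀ r < a, ∀ (A : Set X) (B : Set Y), IsClopen A → IsClopen B → ∀ (x : A) (y : B),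
      cbDeriv A r = {x} → cbDeriv B r = {y} → Nonempty (A ≃ₜ B))
    {G : Set (X × Y)} (hG : IsPartialGraph s t G) {x : X} (hx : x ≠ s) :
    ∃ G', IsPartialGraph s t G' ∧ G ⊆ G' ∧ x ∈ Prod.fst '' G' := by
  by_cases hxG : x ∈ Prod.fst '' G
  · exact ⟨G, hG, subset_rfl, hxG⟩
  obtain ⟨r, hxr⟩ := exists_mem_cbDeriv_diff x
  have hra : r < a := by
    by_contra! h
    exact hx (hs.le (cbDeriv_antitone h hxr.1))
  have htr : t ∈ cbDeriv Y (r + 1) :=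
    cbDeriv_antitone (Order.add_one_le_of_lt hra) (ht.ge (mem_singleton t))
  have hfst : IsClosed (Prod.fst '' G) := isClosedMap_fst_of_compactSpace _ hG.isClosed
  have hsnd : IsClosed (Prod.snd '' G) := isClosedMap_snd_of_compactSpace _ hG.isClosed
  obtain ⟨y, hyG, hyr⟩ := exists_mem_cbDeriv_diff_of_mem_nhds
    (cbDeriv_antitone le_self_add htr) (hsnd.isOpen_compl.mem_nhds hG.notMem_image_snd)
  obtain ⟨A, hA, hAsub, hxA, hAr⟩ := exists_isClopen_cbDeriv_eq_singleton hxr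
    (inter_mem (hfst.isOpen_compl.mem_nhds hxG) (isOpen_compl_singleton.mem_nhds hx))
  have hyt : y ≠ t := fun h ↦ hyr.2 (h ▸ htr)
  obtain ⟨B, hB, hBsub, hyB, hBr⟩ := exists_isClopen_cbDeriv_eq_singleton hyr
    (inter_mem (hsnd.isOpen_compl.mem_nhds hyG) (isOpen_compl_singleton.mem_nhds hyt))
  obtain ⟨e⟩ := ih r hra A B hA hB _ _ hAr hBr
  obtain ⟨E, hE, hEfst, hEsnd⟩ := IsPartialGraph.exists_of_homeomorph (s := s) (t := t) hA
    hB.isOpen e (fun h ↦ (hAsub h).2 rfl) (fun h ↦ (hBsub h).2 rfl)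
  refine ⟨G ∪ E, hG.union hE ?_ ?_, subset_union_left, ?_⟩
  · exact hEfst ▸ (disjoint_left.2 fun z hz ↦ (hAsub hz).1).symm
  · exact hEsnd ▸ (disjoint_left.2 fun z hz ↦ (hBsub hz).1).symm
  · rw [image_union, hEfst]
    exact .inr hxA

/-- The Mazurkiewicz–Sierpiński theorem for a one-point top derivative. -/
theorem nonempty_homeomorph_of_cbDeriv_eq_singleton {a : Ordinal} (hs : cbDeriv X a = {s})
    (ht : cbDeriv Y a = {t}) : Nonempty (X ≃ₜ Y) := by
  induction a using WellFoundedLT.induction generalizing X Y with | _ a ih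
  have ih' (r) (hr : r < a) (A : Set X) (B : Set Y) (hA : IsClopen A) (hB : IsClopen B) (x : A)
      (y : B) (hx : cbDeriv A r = {x}) (hy : cbDeriv B r = {y}) : Nonempty (A ≃ₜ B) := by
    have : CompactSpace A := isCompact_iff_compactSpace.1 hA.isClosed.isCompact
    have : CompactSpace B := isCompact_iff_compactSpace.1 hB.isClosed.isCompact
    exact ih r hr hx hy
  refine nonempty_homeomorph_of_exists_extension (s := s) (t := t)
    (fun G hG x hx ↦ hG.exists_extension hs ht ih' hx) fun G hG y hy ↦ ?_
  obtain ⟨G', hG', hle, hyG'⟩ := hG.swap.exists_extension ht hs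
    (fun r hr B A hB hA y x hy hx ↦ (ih' r hr A B hA hB x y hx hy).map Homeomorph.symm) hy
  refine ⟨Prod.swap '' G', hG'.swap, ?_, ?_⟩
  · rw [image_swap_eq_preimage_swap]
    exact image_subset_iff.1 hle
  · rwa [image_image]

end MazurkiewiczSierpinski

section PositiveIsomorphism

universe u v w

/-- There is a positive isomorphism from `C(K)` onto `C(L)`. -/
def PosIso (K : Type u) (L : Type v) [TopologicalSpace K] [CompactSpace K] [TopologicalSpace L]
    [CompactSpace L] : Prop :=
  ∃ T : C(K, ℝ) ≃L[ℝ] C(L, ℝ), ∀ f : C(K, ℝ), 0 ≤ f → 0 ≤ T f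

variable {K : Type u} {L : Type v} {M : Type w} [TopologicalSpace K] [CompactSpace K]
  [TopologicalSpace L] [CompactSpace L] [TopologicalSpace M] [CompactSpace M]

lemma PosIso.trans (hKL : PosIso K L) (hLM : PosIso L M) : PosIso K M := by
  obtain ⟨T, hT⟩ := hKL
  obtain ⟨S, hS⟩ := hLM
  exact ⟨T.trans S, fun f hf ↦ hS _ (hT f hf)⟩

lemma posIso_of_bijective (S : C(K, ℝ) →L[ℝ] C(L, ℝ)) (hpos : ∀ f, 0 ≤ f → 0 ≤ S f)
    (hinj : Function.Injective S) (hsurj : Function.Surjective S) : PosIso K L :=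
  ⟨.ofBijective S (LinearMap.ker_eq_bot.2 hinj) (LinearMap.range_eq_top.2 hsurj), hpos⟩

lemma posIso_of_surjective_of_nonneg (S : C(L, ℝ) →L[ℝ] C(K, ℝ)) (hS : ∀ g, 0 ≤ S g → 0 ≤ g)
    (hsurj : Function.Surjective S) : PosIso K L := by
  have hinj : Function.Injective S := (injective_iff_map_eq_zero S).2 fun g hg ↦
    le_antisymm (neg_nonneg.1 (hS (-g) (by rw [map_neg, hg, neg_zero]))) (hS g hg.ge)
  let e : C(L, ℝ) ≃L[ℝ] C(K, ℝ) :=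
    .ofBijective S (LinearMap.ker_eq_bot.2 hinj) (LinearMap.range_eq_top.2 hsurj)
  exact ⟨e.symm, fun f hf ↦ hS _ (hf.trans_eq (e.apply_symm_apply f).symm)⟩

lemma posIso_of_homeomorph (e : K ≃ₜ L) : PosIso K L :=
  posIso_of_bijective (ContinuousMap.compCLM ℝ ℝ (e.symm : C(L, K))) (fun _ hf y ↦ hf (e.symm y))
    (fun _ _ h ↦ ContinuousMap.ext fun x ↦ by simpa using congr($h (e x)))
    fun g ↦ ⟨g.comp (e : C(K, L)), by ext; simp⟩

end PositiveIsomorphism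

section Retraction

variable {X : Type*} [TopologicalSpace X] [CompactSpace X] [T2Space X] [Countable X]

variable (X) in
lemma exists_isClosedEmbedding_nat_bool : ∃ c : X → ℕ → Bool, IsClosedEmbedding c := by
  rcases isEmpty_or_nonempty X with _ | _
  · exact ⟨isEmptyElim, .of_continuous_injective_isClosedMap (by fun_prop) isEmptyElim
      fun s _ ↦ by simp [s.eq_empty_of_isEmpty]⟩
  have hsep (p : X × X) : ∃ U, IsClopen U ∧ (p.1 ≠ p.2 → p.1 ∈ U ∧ p.2 ∉ U) := by
    by_cases hp : p.1 = p.2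
    · exact ⟨∅, isClopen_empty, fun h ↦ (h hp).elim⟩
    · obtain ⟨U, hU, hpU, hUp⟩ :=
        exists_isClopen_subset_of_mem_nhds (isOpen_compl_singleton.mem_nhds hp)
      exact ⟨U, hU, fun _ ↦ ⟨hpU, fun h ↦ hUp h rfl⟩⟩
  choose U hU hUsep using hsep
  obtain ⟨e, he⟩ := exists_surjective_nat (X × X)
  refine ⟨fun x n ↦ (U (e n)).boolIndicator x, Continuous.isClosedEmbedding
    (continuous_pi fun n ↦ (continuous_boolIndicator_iff_isClopen _).2 (hU _)) fun x y hxy ↦ ?_⟩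
  by_contra hne
  obtain ⟨n, hn⟩ := he (x, y)
  have hUn : x ∈ U (e n) ∧ y ∉ U (e n) := by simpa only [hn] using hUsep (x, y) hne
  have hx := (mem_iff_boolIndicator _ _).1 hUn.1
  exact hUn.2 ((mem_iff_boolIndicator _ _).2 (congrFun hxy n ▸ hx))

lemma exists_continuousMap_retraction (Z : Set X) [CompactSpace Z] [Nonempty Z] :
    ∃ r : C(X, Z), ∀ z : Z, r z = z := by
  obtain ⟨c, hc⟩ := exists_isClosedEmbedding_nat_bool X
  have hj : IsClosedEmbedding (c ∘ Subtype.val : Z → ℕ → Bool) :=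
    (hc.continuous.comp continuous_subtype_val).isClosedEmbedding
      (hc.injective.comp Subtype.val_injective)
  obtain ⟨f, hf, -, hfc⟩ :=
    PiNat.exists_retraction_subtype_of_isClosed hj.isClosed_range (range_nonempty _)
  let e := hj.isEmbedding.toHomeomorph
  refine ⟨⟨fun x ↦ e.symm (f (c x)), e.symm.continuous.comp (hfc.comp hc.continuous)⟩, fun z ↦ ?_⟩
  exact e.symm_apply_eq.2 (hf (e z))

end Retraction

section Wedge

lemma funext_of_sum_eq {ι M : Type*} [Fintype ι] [AddCommMonoid M] [IsRightCancelAdd M]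
    {f g : ι → M} {i : ι} (hsum : ∑ j, f j = ∑ j, g j) (hne : ∀ j ≠ i, f j = g j) : f = g := by
  classical
  ext j
  rcases eq_or_ne j i with rfl | hj
  · rw [Fintype.sum_eq_add_sum_compl j, Fintype.sum_eq_add_sum_compl j,
      Finset.sum_congr rfl fun k hk ↦ hne k (by simpa using hk)] at hsum
    exact add_right_cancel hsum
  · exact hne j hj

variable {L : Type*} [TopologicalSpace L]

/-- The map whose range is the wedge of `Z` and `L / Z`. The quotient `L / Z` is realised inside
a product of lines, by evaluating the continuous functions vanishing on `Z`. -/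
def wedgeMap (Z : Set L) (t : Z) : Z ⊕ L → Z × ({f : C(L, ℝ) // EqOn f 0 Z} → ℝ) :=
  Sum.elim (fun z ↦ (z, 0)) fun y ↦ (t, fun f ↦ f.1 y)

/-- The wedge `Z ∨ (L / Z)`, in which the base point of `L / Z` is glued to `t ∈ Z`. -/
abbrev Wedge (Z : Set L) (t : Z) := range (wedgeMap Z t)

variable {Z : Set L} {t : Z}

lemma continuous_wedgeMap : Continuous (wedgeMap Z t) :=
  .sumElim (by fun_prop) (by fun_prop)

namespace Wedge

variable (t) in
/-- The inclusion of `Z` in the wedge `Z ∨ (L / Z)`. -/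
def inl : C(Z, Wedge Z t) :=
  ⟨fun z ↦ rangeFactorization (wedgeMap Z t) (.inl z),
    continuous_wedgeMap.rangeFactorization.comp continuous_inl⟩

variable (t) in
/-- The projection of `L` onto the summand `L / Z` of the wedge `Z ∨ (L / Z)`. -/
def inr : C(L, Wedge Z t) :=
  ⟨fun y ↦ rangeFactorization (wedgeMap Z t) (.inr y),
    continuous_wedgeMap.rangeFactorization.comp continuous_inr⟩

instance [Countable L] : Countable (Wedge Z t) := (countable_range _).to_subtype

instance [CompactSpace L] [CompactSpace Z] : CompactSpace (Wedge Z t) :=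
  isCompact_iff_compactSpace.1 (isCompact_range continuous_wedgeMap)

lemma exists_inl_or_inr (q : Wedge Z t) : (∃ z, q = inl t z) ∨ ∃ y, q = inr t y := by
  obtain ⟨_, z | y, rfl⟩ := q
  exacts [.inl ⟨z, rfl⟩, .inr ⟨y, rfl⟩]

lemma inl_injective : Function.Injective (inl t) := fun _ _ h ↦
  congrArg Prod.fst (congrArg Subtype.val h)

lemma inr_of_mem {y : L} (hy : y ∈ Z) : inr t y = inl t t :=
  Subtype.ext (Prod.ext rfl (funext fun f ↦ f.2 hy))

variable [CompactSpace L] [T2Space L]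

section CompactSpace

variable [CompactSpace Z]

lemma eq_of_inr_eq_inr {y y' : L} (hy : y ∉ Z) (h : inr t y = inr t y') : y = y' := by
  by_contra hne
  have hZ : IsClosed Z := (isCompact_iff_compactSpace.2 ‹_›).isClosed
  obtain ⟨f, hf0, hf1, -⟩ := exists_continuous_zero_one_of_isClosed (hZ.union isClosed_singleton)
    (isClosed_singleton (x := y)) (disjoint_singleton_right.2 (not_or_intro hy hne))
  have hf : f y = f y' := congrFun (congrArg (fun q ↦ q.1.2) h) ⟨f, hf0.mono subset_union_left⟩
  exact zero_ne_one ((hf0 (.inr rfl)).symm.trans (hf.symm.trans (hf1 rfl)))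

lemma inr_eq_inl_iff {y : L} {z : Z} : inr t y = inl t z ↔ y ∈ Z ∧ z = t := by
  refine ⟨fun h ↦ ?_, fun ⟨hy, hz⟩ ↦ hz ▸ inr_of_mem hy⟩
  obtain rfl : z = t := (congrArg (fun q ↦ q.1.1) h).symm
  refine ⟨of_not_not fun hy ↦ hy ?_, rfl⟩
  exact eq_of_inr_eq_inr hy (h.trans (inr_of_mem z.2).symm) ▸ z.2

lemma isQuotientMap_rangeFactorization :
    IsQuotientMap (rangeFactorization (wedgeMap Z t)) :=
  continuous_wedgeMap.rangeFactorization.isClosedMap.isQuotientMap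
    continuous_wedgeMap.rangeFactorization rangeFactorization_surjective

lemma exists_continuousMap (u : C(Z, ℝ)) (v : C(L, ℝ)) (huv : ∀ z : Z, v z = u t) :
    ∃ g : C(Wedge Z t, ℝ), (∀ z, g (inl t z) = u z) ∧ ∀ y, g (inr t y) = v y := by
  have hq : IsQuotientMap (⟨_, continuous_wedgeMap.rangeFactorization⟩ : C(Z ⊕ L, Wedge Z t)) :=
    isQuotientMap_rangeFactorization
  have huv' {y : L} (hy : y ∈ Z) : v y = u t := huv ⟨y, hy⟩
  have hfactors : Function.FactorsThrough (⟨_, u.continuous.sumElim v.continuous⟩ : C(Z ⊕ L, ℝ))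
      (⟨_, continuous_wedgeMap.rangeFactorization⟩ : C(Z ⊕ L, Wedge Z t)) := by
    rintro (z | y) (z' | y') h
    · exact congrArg u (inl_injective h)
    · obtain ⟨hy, rfl⟩ := inr_eq_inl_iff.1 h.symm
      exact (huv' hy).symm
    · obtain ⟨hy, rfl⟩ := inr_eq_inl_iff.1 h
      exact huv' hy
    · by_cases hy : y ∈ Z
      · have hy' := (inr_eq_inl_iff.1 (h.symm.trans (inr_of_mem hy))).1
        exact (huv' hy).trans (huv' hy').symm
      · exact congrArg v (eq_of_inr_eq_inr hy h)
  have hlift := hq.lift_comp _ hfactors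
  exact ⟨hq.lift _ hfactors, fun z ↦ congr($hlift (.inl z)), fun y ↦ congr($hlift (.inr y))⟩

lemma posIso [Countable L] : PosIso (Wedge Z t) L := by
  have : Nonempty Z := ⟨t⟩
  obtain ⟨r, hr⟩ := exists_continuousMap_retraction Z
  let S : C(Wedge Z t, ℝ) →L[ℝ] C(L, ℝ) :=
    ContinuousMap.compCLM ℝ ℝ (inr t) + ContinuousMap.compCLM ℝ ℝ ((inl t).comp r)
  have hS (g y) : S g y = g (inr t y) + g (inl t (r y)) := rfl
  have hSZ (g) (z : Z) : S g z = g (inl t t) + g (inl t z) := by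
    rw [hS, hr, inr_of_mem z.2]
  refine posIso_of_bijective S (fun g hg y ↦ add_nonneg (hg _) (hg _)) ?_ fun g ↦ ?_
  · refine (injective_iff_map_eq_zero S).2 fun g hg ↦ ContinuousMap.ext fun q ↦ ?_
    have hg' (y) : S g y = 0 := congr($hg y)
    have ht : g (inl t t) = 0 := by linarith [hSZ g t, hg' t]
    have hz (z) : g (inl t z) = 0 := by linarith [hSZ g z, hg' z]
    obtain ⟨z, rfl⟩ | ⟨y, rfl⟩ := exists_inl_or_inr q
    · exact hz z
    · exact (by simpa only [hz, add_zero] using (hS g y).symm.trans (hg' y) : g (inr t y) = 0)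
  · let u : C(Z, ℝ) := ⟨fun z ↦ g z - g t / 2, by fun_prop⟩
    let v : C(L, ℝ) := ⟨fun y ↦ g y - u (r y), by fun_prop⟩
    have huv (z : Z) : v z = u t := by
      simp only [u, v, ContinuousMap.coe_mk, hr]
      ring
    obtain ⟨f, hfu, hfv⟩ := exists_continuousMap u v huv
    refine ⟨f, ContinuousMap.ext fun y ↦ ?_⟩
    rw [hS, hfu, hfv, ContinuousMap.coe_mk, sub_add_cancel]

end CompactSpace

-- `S` is the identity on `Z ∖ {t}`, and its value at `t` is chosen so that the values on `Z` add
-- up to the value at the base point; this is what makes `S⁻¹` positive.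
lemma exists_continuousLinearMap_sum_eq [Fintype Z] {r : C(L, Z)} (hr : ∀ z : Z, r z = z) :
    ∃ S : C(Wedge Z t, ℝ) →L[ℝ] C(L, ℝ), ∀ g, (∀ z : Z, z ≠ t → S g z = g (inl t z)) ∧
      ∑ z : Z, S g z = g (inl t t) ∧
      ∀ y, g (inr t y) = S g y + (∑ z : Z, S g z - S g (r y)) := by
  classical
  let χ : C(Z, ℝ) := ⟨Pi.single t 1, continuous_of_discreteTopology⟩
  let σ : C(Wedge Z t, ℝ) →L[ℝ] ℝ := ∑ z ∈ {t}ᶜ, ContinuousMap.evalCLM ℝ (inl t z)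
  let S : C(Wedge Z t, ℝ) →L[ℝ] C(L, ℝ) :=
    ContinuousMap.compCLM ℝ ℝ (inr t) + ContinuousMap.compCLM ℝ ℝ ((inl t).comp r)
      - (ContinuousMap.evalCLM ℝ (inl t t)).smulRight 1 - σ.smulRight (χ.comp r)
  have hS (g y) : S g y = g (inr t y) + g (inl t (r y)) - g (inl t t) - σ g * χ (r y) := by
    simp [S]
  have hSZ (g) (z : Z) : S g z = g (inl t z) - σ g * χ z := by
    rw [hS, hr, inr_of_mem z.2]
    ring
  have hsum (g) : ∑ z : Z, S g z = g (inl t t) := by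
    simp_rw [hSZ, Finset.sum_sub_distrib, ← Finset.mul_sum]
    rw [Fintype.sum_eq_add_sum_compl t fun z ↦ g (inl t z)]
    simp [σ, χ]
  refine ⟨S, fun g ↦ ⟨fun z hz ↦ ?_, hsum g, fun y ↦ ?_⟩⟩
  · simp [hSZ, χ, hz]
  · rw [hsum, hSZ, hS]
    ring

lemma posIso_of_finite [Countable L] [Finite Z] : PosIso L (Wedge Z t) := by
  classical
  have := Fintype.ofFinite Z
  have : Nonempty Z := ⟨t⟩
  obtain ⟨r, hr⟩ := exists_continuousMap_retraction Z
  obtain ⟨S, hS⟩ := exists_continuousLinearMap_sum_eq (t := t) hr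
  choose hne hsum hinr using hS
  refine posIso_of_surjective_of_nonneg S (fun g hg q ↦ (?_ : 0 ≤ g q)) fun f ↦ ?_
  · have hg' (y) : 0 ≤ S g y := hg y
    obtain ⟨z, rfl⟩ | ⟨y, rfl⟩ := exists_inl_or_inr q
    · rcases eq_or_ne z t with rfl | hz
      · rw [← hsum]
        exact Finset.sum_nonneg fun z _ ↦ hg' z
      · exact (hg' z).trans_eq (hne g z hz)
    · rw [hinr]
      exact add_nonneg (hg' y) (sub_nonneg.2 (Finset.single_le_sum
        (f := fun z : Z ↦ S g z) (fun z _ ↦ hg' z) (Finset.mem_univ (r y))))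
  · let u : C(Z, ℝ) :=
      ⟨Function.update (fun z ↦ f z) t (∑ z : Z, f z), continuous_of_discreteTopology⟩
    have hut : u t = ∑ z : Z, f z := by simp [u]
    let v : C(L, ℝ) := ⟨fun y ↦ f y + (∑ z : Z, f z - f (r y)), by fun_prop⟩
    have hv (y) : v y = f y + (∑ z : Z, f z - f (r y)) := rfl
    obtain ⟨g, hgu, hgv⟩ := exists_continuousMap u v fun z ↦ by rw [hv, hut, hr]; ring
    have hsum' : ∑ z : Z, S g z = ∑ z : Z, f z := by rw [hsum, hgu, hut]
    have hZ : (fun z : Z ↦ S g z) = fun z : Z ↦ f z := by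
      refine funext_of_sum_eq (i := t) hsum' fun z hz ↦ ?_
      rw [hne g z hz, hgu]
      simp [u, hz]
    refine ⟨g, ContinuousMap.ext fun y ↦ ?_⟩
    linarith [hinr g y, hgv y, hv y, congrFun hZ (r y)]

end Wedge

end Wedge

section WedgeHeight

lemma mem_cbDeriv_iff_of_isClosedMap {X Y : Type*} [TopologicalSpace X] [TopologicalSpace Y]
    {f : X → Y} (hf : Continuous f) (hfc : IsClosedMap f) {W : Set Y} (hW : IsOpen W)
    (hWf : W ⊆ range f) (hinj : InjOn f (f ⁻¹' W)) {o : Ordinal} {x : X} (hx : f x ∈ W) :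
    x ∈ cbDeriv X o ↔ f x ∈ cbDeriv Y o := by
  have hhomeo : IsHomeomorph (W.restrictPreimage f) := by
    refine isHomeomorph_iff_continuous_isClosedMap_bijective.2 ⟨hf.restrictPreimage,
      hfc.restrictPreimage W, fun a b h ↦ Subtype.ext (hinj a.2 b.2 congr(($h).1)), fun w ↦ ?_⟩
    obtain ⟨a, ha⟩ := hWf w.2
    exact ⟨⟨a, mem_preimage.2 (ha ▸ w.2)⟩, Subtype.ext ha⟩
  have hX := mem_cbDeriv_iff_of_isOpenEmbedding (hW.preimage hf).isOpenEmbedding_subtypeVal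
    (o := o) (x := ⟨x, hx⟩)
  exact hX.symm.trans (mem_cbDeriv_iff_of_isOpenEmbedding
    (hW.isOpenEmbedding_subtypeVal.comp hhomeo.isOpenEmbedding))

namespace Wedge

variable {L : Type*} [TopologicalSpace L] [CompactSpace L] [T2Space L]

section

variable {Z : Set L} [CompactSpace Z] {t : Z} {o : Ordinal}

lemma mem_cbDeriv_inr_iff {y : L} (hy : y ∉ Z) : inr t y ∈ cbDeriv (Wedge Z t) o ↔
    y ∈ cbDeriv L o := by
  have hW {y : L} : inr t y ∈ (range (inl t))ᶜ → y ∉ Z := fun h hy ↦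
    h ⟨t, (inr_of_mem hy).symm⟩
  refine (mem_cbDeriv_iff_of_isClosedMap (inr t).continuous (inr t).continuous.isClosedMap
    (isCompact_range (inl t).continuous).isClosed.isOpen_compl (fun q hq ↦ ?_)
    (fun a ha b _ h ↦ eq_of_inr_eq_inr (hW ha) h) ?_).symm
  · obtain ⟨z, rfl⟩ | ⟨y, rfl⟩ := exists_inl_or_inr q
    exacts [(hq (mem_range_self z)).elim, mem_range_self y]
  · rintro ⟨z, hz⟩
    exact hy (inr_eq_inl_iff.1 hz.symm).1

lemma mem_cbDeriv_inl_iff {z : Z} (hz : z ≠ t) : inl t z ∈ cbDeriv (Wedge Z t) o ↔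
    z ∈ cbDeriv Z o := by
  refine (mem_cbDeriv_iff_of_isClosedMap (inl t).continuous (inl t).continuous.isClosedMap
    (isCompact_range (inr t).continuous).isClosed.isOpen_compl (fun q hq ↦ ?_)
    inl_injective.injOn ?_).symm
  · obtain ⟨z, rfl⟩ | ⟨y, rfl⟩ := exists_inl_or_inr q
    exacts [mem_range_self z, (hq (mem_range_self y)).elim]
  · rintro ⟨y, hy⟩
    exact hz (inr_eq_inl_iff.1 hy).2

end

variable {a : Ordinal} {t : cbDeriv L a}

lemma cbDeriv_subset {m : Ordinal} (ham : a ≤ m) : cbDeriv (Wedge (cbDeriv L a) t) m ⊆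
    insert (inl t t) (inl t '' cbDeriv (cbDeriv L a) m) := by
  intro q hq
  obtain ⟨z, rfl⟩ | ⟨y, rfl⟩ := exists_inl_or_inr q
  · rcases eq_or_ne z t with rfl | hz
    exacts [.inl rfl, .inr ⟨z, (mem_cbDeriv_inl_iff hz).1 hq, rfl⟩]
  · by_cases hy : y ∈ cbDeriv L a
    exacts [.inl (inr_of_mem hy), (hy (cbDeriv_antitone ham ((mem_cbDeriv_inr_iff hy).1 hq))).elim]

variable [Countable L]

lemma inl_mem_cbDeriv : inl t t ∈ cbDeriv (Wedge (cbDeriv L a) t) a := by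
  suffices ∀ o ≤ a, inl t t ∈ cbDeriv (Wedge (cbDeriv L a) t) o from this a le_rfl
  intro o
  induction o using Ordinal.limitRecOn with
  | zero => exact fun _ ↦ cbDeriv_zero.ge (mem_univ _)
  | add_one o _ =>
    intro hoa
    rw [cbDeriv_add_one, mem_derivedSet, accPt_iff_nhds]
    intro N hN
    rw [← inr_of_mem t.2] at hN
    obtain ⟨y, hyN, hy⟩ := exists_mem_cbDeriv_diff_of_mem_nhds
      (cbDeriv_antitone (le_self_add.trans hoa) t.2) ((inr t).continuous.continuousAt hN)
    have hya : y ∉ cbDeriv L a := fun h ↦ hy.2 (cbDeriv_antitone hoa h)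
    exact ⟨inr t y, ⟨hyN, (mem_cbDeriv_inr_iff hya).2 hy.1⟩, fun e ↦ hya (inr_eq_inl_iff.1 e).1⟩
  | limit o ho ih =>
    exact fun hoa ↦ (mem_cbDeriv_of_isSuccLimit ho).2 fun b hb ↦ ih b hb (hb.le.trans hoa)

lemma cbDeriv_eq_singleton (ha : 1 ≤ a) [Finite (cbDeriv L a)] :
    cbDeriv (Wedge (cbDeriv L a) t) a = {inl t t} := by
  refine subset_antisymm (fun q hq ↦ ?_) (singleton_subset_iff.2 inl_mem_cbDeriv)
  have hempty : cbDeriv (cbDeriv L a) a = ∅ := subset_empty_iff.1 <| (cbDeriv_antitone ha).trans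
    (by rw [cbDeriv_one, derivedSet_eq_empty_of_finite finite_univ])
  simpa only [hempty, image_empty, insert_empty_eq] using cbDeriv_subset le_rfl hq

lemma cbHeight_le {τ : Ordinal} (hfin : (cbDeriv (cbDeriv L a) τ).Finite) :
    cbHeight (Wedge (cbDeriv L a) t) ≤ max a τ + 1 := by
  rw [← cbDeriv_eq_empty_iff, cbDeriv_add_one]
  refine derivedSet_eq_empty_of_finite (((hfin.image (inl t)).insert (inl t t)).subset ?_)
  exact (cbDeriv_subset (le_max_left a τ)).trans
    (insert_subset_insert (image_mono (cbDeriv_antitone (le_max_right a τ))))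

end Wedge

-- Replacing `L` by the wedge `cbDeriv L a ∨ (L / cbDeriv L a)` lowers the height `a + τ + 1`
-- to at most `max a τ + 1`.
theorem posIso_of_cbDeriv_eq_singleton {W L : Type*} [TopologicalSpace W] [CompactSpace W]
    [T2Space W] [Countable W] [TopologicalSpace L] [CompactSpace L] [T2Space L] [Countable L]
    {a : Ordinal} {s : W} (hs : cbDeriv W a = {s}) (ha : 1 ≤ a) (haL : a < cbHeight L)
    (hL : cbHeight L < a * ω) : PosIso W L := by
  induction hb : cbHeight L using WellFoundedLT.induction generalizing L with | _ b ih
  subst hb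
  obtain ⟨x, hx⟩ := nonempty_cbDeriv_iff.2 haL
  have : Nonempty L := ⟨x⟩
  let Q : Type _ := Wedge (cbDeriv L a) ⟨x, hx⟩
  suffices PosIso W Q from this.trans Wedge.posIso
  obtain ⟨b, hb, -, hfin⟩ := exists_cbHeight_eq_add_one L
  obtain ⟨τ, rfl⟩ := exists_add_of_le (Order.lt_add_one_iff.1 (hb ▸ haL))
  rcases eq_zero_or_pos τ with rfl | hτ
  · have : Finite (cbDeriv L a) := by simpa only [add_zero] using hfin.to_subtype
    exact posIso_of_homeomorph
      (nonempty_homeomorph_of_cbDeriv_eq_singleton hs (Wedge.cbDeriv_eq_singleton ha)).some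
  have hτ_lt : τ < a + τ := le_add_self.lt_of_ne fun e ↦
    (Ordinal.add_eq_right_iff_mul_omega0_le.1 e.symm).not_gt
      (e ▸ (lt_add_one (a + τ)).trans (hb ▸ hL))
  have hQL : cbHeight Q < cbHeight L := by
    have hQ : cbHeight Q ≤ max a τ + 1 := Wedge.cbHeight_le <| by
      rw [cbDeriv_cbDeriv]
      exact hfin.preimage Subtype.val_injective.injOn
    rw [hb, Order.lt_add_one_iff]
    exact hQ.trans (Order.add_one_le_of_lt (max_lt (lt_add_of_pos_right a hτ) hτ_lt))
  exact ih _ hQL (nonempty_cbDeriv_iff.1 ⟨_, Wedge.inl_mem_cbDeriv⟩) (hQL.trans hL) rfl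

end WedgeHeight

section PositiveOperator

variable {K L : Type*} [TopologicalSpace K] [TopologicalSpace L]

lemma exists_mem_cbDeriv_of_finite_fibers [T1Space K] [CompactSpace L] [T1Space L]
    {F : Set (K × L)} (hF : IsClosed F) (hfin : ∀ y, {x | (x, y) ∈ F}.Finite)
    (htot : ∀ x, ∃ y, (x, y) ∈ F) (o : Ordinal) {x : K} (hx : x ∈ cbDeriv K o) :
    ∃ y ∈ cbDeriv L o, (x, y) ∈ F := by
  induction o using Ordinal.limitRecOn generalizing x with
  | zero => exact (htot x).imp fun y hy ↦ ⟨cbDeriv_zero.ge (mem_univ y), hy⟩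
  | add_one o ih =>
    have : Nonempty L := ⟨(htot x).choose⟩
    choose! φ hφ hφF using fun x (hx : x ∈ cbDeriv K o) ↦ ih hx
    rw [cbDeriv_add_one, mem_derivedSet, AccPt] at hx
    let u := Ultrafilter.of (𝓝[≠] x ⊓ 𝓟 (cbDeriv K o))
    have hux : (u : Filter K) ≤ 𝓝[≠] x := (Ultrafilter.of_le _).trans inf_le_left
    have huo : ∀ᶠ x' in u, x' ∈ cbDeriv K o :=
      le_principal_iff.1 ((Ultrafilter.of_le _).trans inf_le_right)
    obtain ⟨y, hy⟩ : ∃ y, Tendsto φ u (𝓝 y) := ⟨_, (u.map φ).le_nhds_lim⟩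
    have hne : ∀ᶠ x' in u, φ x' ≠ y := by
      have : ∀ᶠ x' in 𝓝[≠] x, x' ∉ {x' | (x', y) ∈ F} \ {x} :=
        nhdsWithin_le_nhds (((hfin y).sdiff.isClosed).compl_mem_nhds (by simp))
      filter_upwards [hux this, hux self_mem_nhdsWithin, huo] with x' hx' hxx' hx'o e
      exact hx' ⟨e ▸ hφF x' hx'o, hxx'⟩
    refine ⟨y, ?_, hF.mem_of_tendsto
      ((tendsto_id.mono_left (hux.trans nhdsWithin_le_nhds)).prodMk_nhds hy) (huo.mono hφF)⟩
    rw [cbDeriv_add_one, mem_derivedSet, AccPt]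
    exact (tendsto_inf.2 ⟨tendsto_nhdsWithin_iff.2 ⟨hy, hne⟩,
      tendsto_principal.2 (huo.mono hφ)⟩).neBot
  | limit o ho ih =>
    have : Nonempty (Iio o) := ⟨⟨0, bot_lt_iff_ne_bot.2 ho.ne_bot⟩⟩
    have hclosed (b : Iio o) : IsClosed (cbDeriv L b.1 ∩ {y | (x, y) ∈ F}) :=
      (isClosed_cbDeriv b.1).inter (hF.preimage (by fun_prop))
    obtain ⟨y, hy⟩ := IsCompact.nonempty_iInter_of_directed_nonempty_isCompact_isClosed
      (fun b : Iio o ↦ cbDeriv L b.1 ∩ {y | (x, y) ∈ F})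
      (directed_of_isDirected_le fun _ _ hab ↦ inter_subset_inter_left _ (cbDeriv_antitone hab))
      (fun b ↦ ih b.1 b.2 ((mem_cbDeriv_of_isSuccLimit ho).1 hx b.1 b.2))
      (fun b ↦ (hclosed b).isCompact) hclosed
    rw [mem_iInter] at hy
    exact ⟨y, (mem_cbDeriv_of_isSuccLimit ho).2 fun b hb ↦ (hy ⟨b, hb⟩).1, (hy this.some).2⟩

variable [CompactSpace K] {c : ℝ}

lemma exists_forall_mul_le [CompactSpace L] {T : C(K, ℝ) →L[ℝ] C(L, ℝ)} (hc : 0 < c)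
    (hT : ∀ f, 0 ≤ f → 0 ≤ T f) (hcT : ∀ f, c * ‖f‖ ≤ ‖T f‖) (x : K) :
    ∃ y, ∀ f, 0 ≤ f → c * f x ≤ T f y := by
  let D := {f : C(K, ℝ) // 0 ≤ f ∧ f x = 1}
  have hmono : Monotone T := fun f g hfg ↦ sub_nonneg.1 (map_sub T g f ▸ hT _ (sub_nonneg.2 hfg))
  have : Nonempty D := ⟨⟨1, zero_le_one, rfl⟩⟩
  have hclosed (f : D) : IsClosed {y | c ≤ T f.1 y} :=
    isClosed_le continuous_const (T f.1).continuous
  have hne (f : D) : {y | c ≤ T f.1 y}.Nonempty := by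
    by_contra! hempty
    have hlt : ‖T f.1‖ < c := (ContinuousMap.norm_lt_iff _ hc).2 fun y ↦
      (Real.norm_of_nonneg (hT f.1 f.2.1 y)).trans_lt
        (not_le.1 (eq_empty_iff_forall_notMem.1 hempty y))
    have hnorm : 1 ≤ ‖f.1‖ := by simpa [f.2.2] using f.1.norm_coe_le_norm x
    exact absurd ((le_mul_of_one_le_right hc.le hnorm).trans (hcT f.1)) hlt.not_ge
  have hdir : Directed (· ⊇ ·) fun f : D ↦ {y | c ≤ T f.1 y} := fun f g ↦
    ⟨⟨f.1 ⊓ g.1, le_inf f.2.1 g.2.1, by simp [f.2.2, g.2.2]⟩,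
      fun y hy ↦ hy.trans (hmono inf_le_left y), fun y hy ↦ hy.trans (hmono inf_le_right y)⟩
  obtain ⟨y, hy⟩ := IsCompact.nonempty_iInter_of_directed_nonempty_isCompact_isClosed _ hdir hne
    (fun f ↦ (hclosed f).isCompact) hclosed
  rw [mem_iInter] at hy
  refine ⟨y, fun f hf ↦ ?_⟩
  obtain hfx | hfx : 0 = f x ∨ 0 < f x := (hf x).eq_or_lt
  · simpa [← hfx] using hT f hf y
  · have hle := hy ⟨(f x)⁻¹ • f, smul_nonneg (inv_nonneg.2 hfx.le) hf, by simp [hfx.ne']⟩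
    rw [mem_ofPred_eq, map_smul] at hle
    exact mul_comm c (f x) ▸ (le_inv_mul_iff₀ hfx).1 hle

lemma mul_sum_le [T2Space K] {T : C(K, ℝ) →L[ℝ] C(L, ℝ)} (hT : ∀ f, 0 ≤ f → 0 ≤ T f) {y : L}
    (S : Finset K) (hS : ∀ x ∈ S, ∀ f, 0 ≤ f → c * f x ≤ T f y) {f : C(K, ℝ)} (hf : 0 ≤ f) :
    c * ∑ x ∈ S, f x ≤ T f y := by
  classical
  induction S using Finset.induction generalizing f with
  | empty => simpa using hT f hf y
  | insert a S ha ih =>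
    obtain ⟨h, hhS, hha, hh⟩ := exists_continuous_zero_one_of_isClosed
      (S.finite_toSet.isClosed) (isClosed_singleton (x := a)) (by simpa using ha)
    have hfh : 0 ≤ f * h := mul_nonneg hf fun x ↦ (hh x).1
    have hfh' : 0 ≤ f * (1 - h) := mul_nonneg hf fun x ↦ sub_nonneg.2 (hh x).2
    have hadd : T f y = T (f * h) y + T (f * (1 - h)) y := by
      rw [← ContinuousMap.add_apply, ← map_add, ← mul_add, add_sub_cancel h 1, mul_one]
    have ha' := hS a (Finset.mem_insert_self a S) _ hfh
    have hS' := ih (fun x hx ↦ hS x (Finset.mem_insert_of_mem hx)) hfh'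
    have hsum : ∑ x ∈ S, (f * (1 - h)) x = ∑ x ∈ S, f x :=
      Finset.sum_congr rfl fun x hx ↦ by simp [hhS hx]
    have hfa : (f * h) a = f a := by simp [hha rfl]
    rw [Finset.sum_insert ha, mul_add, hadd]
    exact add_le_add (hfa ▸ ha') (hsum ▸ hS')

lemma finite_setOf_forall_mul_le [T2Space K] {T : C(K, ℝ) →L[ℝ] C(L, ℝ)} (hc : 0 < c)
    (hT : ∀ f, 0 ≤ f → 0 ≤ T f) (y : L) : {x | ∀ f, 0 ≤ f → c * f x ≤ T f y}.Finite := by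
  by_contra hinf
  obtain ⟨n, hn⟩ := exists_nat_gt (T 1 y / c)
  obtain ⟨S, hS, rfl⟩ := Set.Infinite.exists_subset_card_eq hinf n
  have := mul_sum_le hT S (fun x hx ↦ hS hx) zero_le_one
  rw [div_lt_iff₀' hc] at hn
  exact hn.not_ge (by simpa using this)

theorem PosIso.cbHeight_le [T2Space K] [Countable K] [CompactSpace L] [T2Space L] [Countable L]
    (h : PosIso K L) : cbHeight K ≤ cbHeight L := by
  obtain ⟨T, hT⟩ := h
  obtain ⟨C, hC, hTC⟩ := (T.symm : C(L, ℝ) →L[ℝ] C(K, ℝ)).bound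
  have hcT (f) : C⁻¹ * ‖f‖ ≤ ‖T f‖ := (inv_mul_le_iff₀ hC).2 (by simpa using hTC (T f))
  let S : C(K, ℝ) →L[ℝ] C(L, ℝ) := T
  have hF : IsClosed {p : K × L | ∀ f, 0 ≤ f → C⁻¹ * f p.1 ≤ S f p.2} := by
    simp only [ofPred_forall]
    exact isClosed_iInter fun f ↦ isClosed_iInter fun _ ↦ isClosed_le (by fun_prop) (by fun_prop)
  rw [← cbDeriv_eq_empty_iff, eq_empty_iff_forall_notMem]
  intro x hx
  obtain ⟨y, hy, -⟩ := exists_mem_cbDeriv_of_finite_fibers hF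
    (finite_setOf_forall_mul_le (T := S) (inv_pos.2 hC) hT)
    (exists_forall_mul_le (T := S) (inv_pos.2 hC) hT hcT) _ hx
  exact (cbDeriv_eq_empty_iff.2 le_rfl).le hy

end PositiveOperator

section ExtendZero

open TopologicalSpace (Clopens)

variable {X : Type*} [TopologicalSpace X] [CompactSpace X] [T2Space X]

instance (P : Clopens X) : CompactSpace P :=
  isCompact_iff_compactSpace.1 P.isClopen.isClosed.isCompact

/-- Extension of continuous functions on a clopen set by zero outside of it. -/
noncomputable def extendZeroCLM (P : Clopens X) : C(P, ℝ) →L[ℝ] C(X, ℝ) :=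
  LinearMap.mkContinuous
    { toFun f := ⟨Function.extend Subtype.val f 0,
        HasCompactSupport.continuous_extend_zero P.isOpen f.continuous
          (HasCompactSupport.of_compactSpace f)⟩
      map_add' f g := ContinuousMap.ext <| congrFun <|
        (Function.ExtendByZero.linearMap ℝ Subtype.val).map_add f g
      map_smul' r f := ContinuousMap.ext <| congrFun <|
        (Function.ExtendByZero.linearMap ℝ Subtype.val).map_smul r f }
    1 fun f ↦ by
      refine (ContinuousMap.norm_le _ (by positivity)).2 fun x ↦ ?_
      rw [one_mul]
      by_cases hx : ∃ p : P, (p : X) = x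
      · obtain ⟨p, rfl⟩ := hx
        exact (congrArg norm (Subtype.val_injective.extend_apply f _ p)).trans_le
          (f.norm_coe_le_norm p)
      · exact (congrArg norm (Function.extend_apply' f _ x hx)).trans_le
          (norm_zero.trans_le (norm_nonneg f))

variable {P : Clopens X}

lemma extendZeroCLM_apply_of_mem (f : C(P, ℝ)) {x : X} (hx : x ∈ P) :
    extendZeroCLM P f x = f ⟨x, hx⟩ :=
  Subtype.val_injective.extend_apply f _ ⟨x, hx⟩

lemma extendZeroCLM_restrict_apply_of_mem (f : C(X, ℝ)) {x : X} (hx : x ∈ P) :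
    extendZeroCLM P (f.restrict P) x = f x :=
  extendZeroCLM_apply_of_mem _ hx

lemma extendZeroCLM_apply_of_notMem (f : C(P, ℝ)) {x : X} (hx : x ∉ P) :
    extendZeroCLM P f x = 0 :=
  Function.extend_apply' f _ x fun ⟨p, hp⟩ ↦ hx (hp ▸ p.2)

lemma norm_extendZeroCLM_le : ‖extendZeroCLM P‖ ≤ 1 :=
  LinearMap.mkContinuous_norm_le _ zero_le_one _

lemma norm_extendZeroCLM_add_le {r : ℝ} {f : C(P, ℝ)} (hf : ‖f‖ ≤ r) {h : C(X, ℝ)}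
    (hhP : EqOn h 0 P) (hh : ‖h‖ ≤ r) : ‖extendZeroCLM P f + h‖ ≤ r := by
  refine (ContinuousMap.norm_le _ ((norm_nonneg f).trans hf)).2 fun x ↦ ?_
  rw [ContinuousMap.add_apply]
  by_cases hx : x ∈ P
  · rw [hhP hx, extendZeroCLM_apply_of_mem f hx, Pi.zero_apply, add_zero]
    exact (f.norm_coe_le_norm _).trans hf
  · rw [extendZeroCLM_apply_of_notMem f hx, zero_add]
    exact (h.norm_coe_le_norm x).trans hh

lemma exists_eq_smul_one_add_extendZeroCLM_add (P : Clopens X) (s : X) {g : C(X, ℝ)}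
    (hg : ‖g‖ ≤ 1) :
    ∃ k : C(P, ℝ), ∃ h : C(X, ℝ), g = g s • 1 + (2 : ℝ) • (extendZeroCLM P k + h) ∧
      ‖k‖ ≤ 1 ∧ EqOn h 0 P ∧ h s = 0 ∧ ‖h‖ ≤ 1 := by
  have hgx (x : X) : |g x| ≤ 1 := (g.norm_coe_le_norm x).trans hg
  let k : C(X, ℝ) := (1 / 2 : ℝ) • (g - g s • 1)
  let h : C(X, ℝ) := k - extendZeroCLM P (k.restrict P)
  have hks : k s = 0 := by simp [k]
  have hkx (x : X) : |k x| ≤ 1 := by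
    have hx := abs_le.1 (hgx x)
    have hs := abs_le.1 (hgx s)
    have : k x = 1 / 2 * (g x - g s) := by simp [k]
    rw [this, abs_le]
    constructor <;> linarith
  have hhP : EqOn h 0 P := fun x hx ↦ by simp [h, extendZeroCLM_restrict_apply_of_mem k hx]
  have hhP' {x : X} (hx : x ∉ P) : h x = k x := by simp [h, extendZeroCLM_apply_of_notMem _ hx]
  refine ⟨k.restrict P, h, by simp [h, k],
    (ContinuousMap.norm_le _ zero_le_one).2 fun x ↦ hkx x, hhP, ?_,
    (ContinuousMap.norm_le _ zero_le_one).2 fun x ↦ ?_⟩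
  · by_cases hs : s ∈ P
    exacts [hhP hs, (hhP' hs).trans hks]
  · by_cases hx : x ∈ P
    · simp [hhP hx]
    · exact hhP' hx ▸ hkx x

lemma norm_clm_le_of_eqOn_zero {ν : C(X, ℝ) →L[ℝ] ℝ} {s : X} {δ : ℝ}
    (hν : ∀ h : C(X, ℝ), EqOn h 0 P → h s = 0 → ‖h‖ ≤ 1 → ν h ≤ δ) :
    ‖ν‖ ≤ |ν 1| + 2 * (‖ν.comp (extendZeroCLM P)‖ + δ) := by
  have hδ : 0 ≤ δ := by simpa using hν 0 (fun _ _ ↦ rfl) rfl (by simp)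
  suffices hle : ∀ g : C(X, ℝ), ‖g‖ ≤ 1 →
      ν g ≤ |ν 1| + 2 * (‖ν.comp (extendZeroCLM P)‖ + δ) from
    ContinuousLinearMap.opNorm_le_of_unit_norm (by positivity) fun g hg ↦
      abs_le'.2 ⟨hle g hg.le, map_neg ν g ▸ hle (-g) (by rw [norm_neg, hg])⟩
  intro g hg
  obtain ⟨k, h, hg_eq, hk, hhP, hhs, hh⟩ := exists_eq_smul_one_add_extendZeroCLM_add P s hg
  have hνk : ν (extendZeroCLM P k) ≤ ‖ν.comp (extendZeroCLM P)‖ :=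
    (le_abs_self _).trans ((ν.comp (extendZeroCLM P)).unit_le_opNorm k hk)
  have hνs : g s * ν 1 ≤ |ν 1| := (le_abs_self _).trans <| by
    rw [abs_mul]
    exact mul_le_of_le_one_left (abs_nonneg _) ((g.norm_coe_le_norm s).trans hg)
  calc ν g = g s * ν 1 + 2 * (ν (extendZeroCLM P k) + ν h) := by
        conv_lhs => rw [hg_eq]
        simp only [map_add, map_smul, _root_.smul_eq_mul]
    _ ≤ |ν 1| + 2 * (‖ν.comp (extendZeroCLM P)‖ + δ) := by
        gcongr
        exact hν h hhP hhs hh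

lemma exists_clopens_extendZeroCLM_mem [TotallyDisconnectedSpace X] {s : X} {f : C(X, ℝ)}
    (hf : f s = 0) {G : Set C(X, ℝ)} (hG : G ∈ 𝓝 f) :
    ∃ P : Clopens X, s ∉ P ∧ extendZeroCLM P (f.restrict P) ∈ G := by
  obtain ⟨ε, hε, hεG⟩ := Metric.mem_nhds_iff.1 hG
  obtain ⟨Z, hZ, hsZ, hZf⟩ : ∃ Z, IsClopen Z ∧ s ∈ Z ∧ Z ⊆ {x | |f x| < ε} :=
    compact_exists_isClopen_in_isOpen (isOpen_lt (by fun_prop) continuous_const) (by simpa [hf])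
  let P : Clopens X := ⟨Zᶜ, hZ.compl⟩
  refine ⟨P, fun hs ↦ hs hsZ, hεG ((ContinuousMap.dist_lt_iff hε).2 fun x ↦ ?_)⟩
  by_cases hx : x ∈ P
  · simpa [extendZeroCLM_restrict_apply_of_mem f hx] using hε
  · rw [extendZeroCLM_apply_of_notMem _ hx, dist_zero_left]
    exact hZf (of_not_not hx)

end ExtendZero

section SeparatedSystem

universe u v

variable {L : Type v} [TopologicalSpace L] {E F : Type*} [NormedAddCommGroup E] [NormedSpace ℝ E]
  [NormedAddCommGroup F] [NormedSpace ℝ F] {c : ℝ}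

/-- A family of functionals that is weak-star continuous, bounded, and whose members are at mutual
distance at least `c > 0`. The evaluations at the points of `L`, pulled back along an isomorphism
onto `C(L, ℝ)`, are the motivating example. -/
structure IsSeparatedSystem (c : ℝ) (μ : L → E →L[ℝ] ℝ) : Prop where
  pos : 0 < c
  continuous_apply (f : E) : Continuous fun y ↦ μ y f
  exists_norm_le : ∃ M, ∀ y, ‖μ y‖ ≤ M
  le_norm_sub ⦃y y' : L⦄ : y ≠ y' → c ≤ ‖μ y - μ y'‖

namespace IsSeparatedSystem

lemma evalCLM [CompactSpace L] [T2Space L] :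
    IsSeparatedSystem 1 fun y : L ↦ (ContinuousMap.evalCLM ℝ y : C(L, ℝ) →L[ℝ] ℝ) where
  pos := one_pos
  continuous_apply f := f.continuous
  exists_norm_le := ⟨1, fun y ↦ ContinuousLinearMap.opNorm_le_bound _ zero_le_one fun f ↦
    (f.norm_coe_le_norm y).trans_eq (one_mul _).symm⟩
  le_norm_sub y y' hne := by
    obtain ⟨g, hgy, hgy', hg⟩ := exists_continuous_zero_one_of_isClosed
      (isClosed_singleton (x := y)) (isClosed_singleton (x := y')) (by simpa using hne)
    have hg1 : ‖g‖ ≤ 1 := (ContinuousMap.norm_le _ zero_le_one).2 fun x ↦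
      abs_le.2 ⟨by linarith [(hg x).1], (hg x).2⟩
    refine le_of_eq_of_le ?_ (ContinuousLinearMap.unit_le_opNorm _ g hg1)
    simp [hgy rfl, hgy' rfl]

variable {μ : L → E →L[ℝ] ℝ}

lemma exists_comp_equiv (h : IsSeparatedSystem c μ) (e : F ≃L[ℝ] E) :
    ∃ c', IsSeparatedSystem c' fun y ↦ (μ y).comp (e : F →L[ℝ] E) := by
  obtain ⟨M, hM⟩ := h.exists_norm_le
  have hpos : 0 < ‖(e.symm : E →L[ℝ] F)‖ + 1 := by positivity
  refine ⟨c / (‖(e.symm : E →L[ℝ] F)‖ + 1), div_pos h.pos hpos, fun f ↦ h.continuous_apply (e f),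
    ⟨M * ‖(e : F →L[ℝ] E)‖, fun y ↦ ?_⟩, fun y y' hne ↦ (div_le_iff₀ hpos).2 ?_⟩
  · exact ((μ y).opNorm_comp_le _).trans (by gcongr; exact hM y)
  · have hcomp : μ y - μ y' = ((μ y).comp (e : F →L[ℝ] E) - (μ y').comp (e : F →L[ℝ] E)).comp
        (e.symm : E →L[ℝ] F) := by ext; simp
    calc c ≤ ‖μ y - μ y'‖ := h.le_norm_sub hne
      _ ≤ _ := hcomp ▸ ContinuousLinearMap.opNorm_comp_le _ _
      _ ≤ _ := by gcongr; linarith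

lemma comp_continuous_injective {L' : Type*} [TopologicalSpace L'] (h : IsSeparatedSystem c μ)
    {φ : L' → L} (hφ : Continuous φ) (hinj : φ.Injective) : IsSeparatedSystem c (μ ∘ φ) where
  pos := h.pos
  continuous_apply f := (h.continuous_apply f).comp hφ
  exists_norm_le := h.exists_norm_le.imp fun _ hM y ↦ hM (φ y)
  le_norm_sub _ _ hne := h.le_norm_sub (hinj.ne hne)

lemma discreteTopology [FiniteDimensional ℝ E] (h : IsSeparatedSystem c μ) :
    DiscreteTopology L := by
  have hμ : Continuous μ := continuous_clm_apply.2 h.continuous_apply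
  refine discreteTopology_iff_isOpen_singleton.2 fun y ↦ ?_
  convert (Metric.isOpen_ball (x := μ y) (ε := c)).preimage hμ
  ext y'
  refine ⟨?_, fun hy' ↦ of_not_not fun hne ↦ ?_⟩
  · rintro rfl
    exact Metric.mem_ball_self h.pos
  · exact (h.le_norm_sub hne).not_gt (mem_ball_iff_norm.1 hy')

end IsSeparatedSystem

open TopologicalSpace (Clopens)

section

variable {W : Type*} [TopologicalSpace W] [CompactSpace W] [T2Space W] {μ : L → C(W, ℝ) →L[ℝ] ℝ}
  {s : W} {N : ℝ} {P : Clopens W}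

-- Since `μ y` nearly attains the bound `N` on a function supported in `P`, it has little mass
-- left outside of `P` and `s`; so the separation of the `μ y` must come from their values on `P`.
lemma IsSeparatedSystem.comp_extendZeroCLM (hμ : IsSeparatedSystem c μ)
    (hN : ∀ y f, f s = 0 → ‖f‖ ≤ 1 → μ y f ≤ N) (hs : s ∉ P) {f : C(P, ℝ)} (hf : ‖f‖ ≤ 1)
    (hμf : ∀ y, N - c / 12 < μ y (extendZeroCLM P f)) {a : ℝ} (ha : ∀ y, |μ y 1 - a| < c / 12) :
    IsSeparatedSystem (c / 4) fun y ↦ (μ y).comp (extendZeroCLM P) := by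
  obtain ⟨M, hM⟩ := hμ.exists_norm_le
  have hsmall (y : L) {h : C(W, ℝ)} (hhP : EqOn h 0 P) (hhs : h s = 0) (hh : ‖h‖ ≤ 1) :
      μ y h ≤ c / 12 := by
    have hle := hN y (extendZeroCLM P f + h) (by simp [extendZeroCLM_apply_of_notMem f hs, hhs])
      (norm_extendZeroCLM_add_le hf hhP hh)
    rw [map_add] at hle
    linarith [hμf y]
  refine ⟨by linarith [hμ.pos], fun f ↦ hμ.continuous_apply _, ⟨M, fun y ↦ ?_⟩, fun y y' hne ↦ ?_⟩
  · calc ‖(μ y).comp (extendZeroCLM P)‖ ≤ ‖μ y‖ * ‖extendZeroCLM P‖ :=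
          (μ y).opNorm_comp_le _
      _ ≤ ‖μ y‖ := mul_le_of_le_one_right (norm_nonneg (μ y)) norm_extendZeroCLM_le
      _ ≤ M := hM y
  · have hnorm := norm_clm_le_of_eqOn_zero (P := P) (ν := μ y - μ y') (s := s) (δ := c / 6)
      fun h hhP hhs hh ↦ by
        have hy := hsmall y hhP hhs hh
        have hy' := hsmall y' (h := -h) (fun x hx ↦ by simp [hhP hx]) (by simp [hhs])
          (by rwa [norm_neg])
        rw [map_neg] at hy'
        rw [sub_apply]
        linarith
    have hone : |(μ y - μ y') 1| ≤ c / 6 := by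
      rw [sub_apply]
      linarith [abs_sub_le (μ y 1) a (μ y' 1), ha y, abs_sub_comm (μ y' 1) a ▸ ha y']
    rw [ContinuousLinearMap.sub_comp] at hnorm
    linarith [hμ.le_norm_sub hne]

end

/-- The statement that a separated system over `C(K, ℝ)` is indexed by a space whose
`ω ^ γ`-th derivative is empty whenever that of `K` is; the induction hypothesis on `γ`. -/
def DerivBound (γ : Ordinal.{0}) : Prop :=
  ∀ (K : Type u) [TopologicalSpace K] [CompactSpace K] [T2Space K] [Countable K],
    cbDeriv K (ω ^ γ) = ∅ → ∀ (L : Type v) [TopologicalSpace L] [T1Space L] (c : ℝ)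
      (μ : L → C(K, ℝ) →L[ℝ] ℝ), IsSeparatedSystem c μ → cbDeriv L (ω ^ γ) = ∅

lemma derivBound_zero : DerivBound.{u, v} 0 := by
  intro K _ _ _ _ hK L _ _ c μ hμ
  rw [opow_zero] at *
  have : Finite K := finite_univ_iff.1 (finite_of_derivedSet_eq_empty (cbDeriv_one.symm.trans hK))
  have : FiniteDimensional ℝ C(K, ℝ) :=
    FiniteDimensional.of_injective (ContinuousMap.coeFnLinearMap ℝ) DFunLike.coe_injective
  have := hμ.discreteTopology
  exact eq_empty_of_forall_notMem fun y hy ↦ mem_cbDeriv_one.1 hy (isOpen_discrete _)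

lemma derivBound_of_isSuccLimit {γ : Ordinal} (hγ : Order.IsSuccLimit γ)
    (ih : ∀ δ < γ, DerivBound.{u, v} δ) : DerivBound.{u, v} γ := by
  intro K _ _ _ _ hK L _ _ c μ hμ
  have hlt : cbHeight K < ω ^ γ := cbHeight_lt_of_isSuccLimit
    (isSuccLimit_opow one_lt_omega0 hγ) (cbDeriv_eq_empty_iff.1 hK)
  obtain ⟨δ, hδ, hKδ⟩ := (lt_opow_of_isSuccLimit omega0_ne_zero hγ).1 hlt
  exact subset_empty_iff.1 <| (cbDeriv_antitone (opow_le_opow_right omega0_pos hδ.le)).trans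
    (ih δ hδ K (cbDeriv_eq_empty_iff.2 hKδ.le) L c μ hμ).subset

section

variable {W : Type u} [TopologicalSpace W] [CompactSpace W] [T2Space W] [Countable W] {s : W}
  {δ : Ordinal} [T1Space L] {μ : L → C(W, ℝ) →L[ℝ] ℝ}

lemma DerivBound.apply_le_sub (hδ : DerivBound.{u, v} δ) (hs : cbDeriv W (ω ^ δ) = {s})
    (hμ : IsSeparatedSystem c μ) {e : Ordinal} {N : ℝ}
    (hN : ∀ y ∈ cbDeriv L e, ∀ f, f s = 0 → ‖f‖ ≤ 1 → μ y f ≤ N) :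
    ∀ y ∈ cbDeriv L (e + ω ^ δ), ∀ f, f s = 0 → ‖f‖ ≤ 1 → μ y f ≤ N - c / 12 := by
  intro y hy f hfs hf
  by_contra! hlt
  obtain ⟨P, hsP, hPf⟩ := exists_clopens_extendZeroCLM_mem hfs
    ((isOpen_lt continuous_const (μ y).continuous).mem_nhds hlt)
  let U : Set L :=
    {u | N - c / 12 < μ u (extendZeroCLM P (f.restrict P)) ∧ |μ u 1 - μ y 1| < c / 12}
  have hU : IsOpen U := (isOpen_lt continuous_const (hμ.continuous_apply _)).inter
    (isOpen_lt ((hμ.continuous_apply 1).sub continuous_const).abs continuous_const)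
  have hyU : y ∈ U := ⟨hPf, by simpa using hμ.pos⟩
  have hP : cbDeriv P (ω ^ δ) = ∅ := eq_empty_of_forall_notMem fun p hp ↦ by
    have hps : (p : W) ∈ cbDeriv W (ω ^ δ) :=
      (mem_cbDeriv_iff_of_isOpenEmbedding P.isOpen.isOpenEmbedding_subtypeVal).1 hp
    exact hsP ((hs.subset hps : (p : W) = s) ▸ p.2)
  have hsys := (hμ.comp_continuous_injective
    (continuous_subtype_val.comp (continuous_subtype_val (p := (· ∈ Subtype.val ⁻¹' U))))
    (Subtype.val_injective.comp Subtype.val_injective)).comp_extendZeroCLM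
    (fun u : (Subtype.val ⁻¹' U : Set (cbDeriv L e)) ↦ hN u.1 u.1.2) hsP
    ((ContinuousMap.norm_le _ zero_le_one).2 fun x ↦ (f.norm_coe_le_norm x).trans hf)
    (fun u ↦ u.2.1) (fun u ↦ u.2.2)
  exact (disjoint_cbDeriv_add hU (hδ P hP _ _ _ hsys)).notMem_of_mem_left hyU hy

lemma DerivBound.exists_cbDeriv_mul_natCast_eq_empty (hδ : DerivBound.{u, v} δ)
    (hs : cbDeriv W (ω ^ δ) = {s}) (hμ : IsSeparatedSystem c μ) :
    ∃ n : ℕ, cbDeriv L (ω ^ δ * n) = ∅ := by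
  obtain ⟨M, hM⟩ := hμ.exists_norm_le
  have hbound (n : ℕ) :
      ∀ y ∈ cbDeriv L (ω ^ δ * n), ∀ f, f s = 0 → ‖f‖ ≤ 1 → μ y f ≤ M - n * (c / 12) := by
    induction n with
    | zero =>
      intro y _ f _ hf
      simpa using (le_abs_self _).trans (((μ y).unit_le_opNorm f hf).trans (hM y))
    | succ n ih =>
      intro y hy f hfs hf
      rw [Nat.cast_succ, mul_add_one] at hy
      have := hδ.apply_le_sub hs hμ ih y hy f hfs hf
      push_cast
      linarith
  obtain ⟨n, hn⟩ := exists_nat_gt (M / (c / 12))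
  rw [div_lt_iff₀ (by linarith [hμ.pos])] at hn
  refine ⟨n, eq_empty_of_forall_notMem fun y hy ↦ ?_⟩
  have := hbound n y hy 0 rfl (by simp)
  rw [map_zero] at this
  linarith

end

lemma DerivBound.add_one {δ : Ordinal} (hδ : DerivBound.{u, v} δ) :
    DerivBound.{u, v} (δ + 1) := by
  intro K _ _ _ _ hK L _ _ c μ hμ
  rw [opow_add_one] at *
  have hle : ω ^ δ ≤ ω ^ δ * ω := le_mul_left _ omega0_pos
  obtain hKδ | hKδ := (cbDeriv K (ω ^ δ)).eq_empty_or_nonempty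
  · exact subset_empty_iff.1 ((cbDeriv_antitone hle).trans (hδ K hKδ L c μ hμ).subset)
  obtain ⟨x, hx⟩ := hKδ
  obtain ⟨z, -, hz⟩ := exists_mem_cbDeriv_diff_of_mem_nhds hx univ_mem
  obtain ⟨A, hA, -, hzA, hsing⟩ := exists_isClopen_cbDeriv_eq_singleton hz univ_mem
  have : CompactSpace A := isCompact_iff_compactSpace.1 hA.isClosed.isCompact
  have hlt : cbHeight K < ω ^ δ * ω := cbHeight_lt_of_isSuccLimit
    (isSuccLimit_mul_right (opow_pos δ omega0_pos) isSuccLimit_omega0) (cbDeriv_eq_empty_iff.1 hK)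
  obtain ⟨T, -⟩ := posIso_of_cbDeriv_eq_singleton hsing
    (Order.one_le_iff_pos.2 (opow_pos δ omega0_pos)) (nonempty_cbDeriv_iff.1 ⟨x, hx⟩) hlt
  obtain ⟨c', hc'⟩ := hμ.exists_comp_equiv T
  obtain ⟨n, hn⟩ := hδ.exists_cbDeriv_mul_natCast_eq_empty hsing hc'
  exact subset_empty_iff.1
    ((cbDeriv_antitone (mul_le_mul_right (natCast_lt_omega0 n).le _)).trans hn.subset)

theorem derivBound (γ : Ordinal) : DerivBound.{u, v} γ := by
  induction γ using Ordinal.limitRecOn with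
  | zero => exact derivBound_zero
  | add_one δ ih => exact ih.add_one
  | limit γ hγ ih => exact derivBound_of_isSuccLimit hγ ih

end SeparatedSystem

section GammaOrd

lemma exists_gammaOrd_eq_opow (a : Ordinal) : ∃ γ : Ordinal, GammaOrd a = ω ^ γ ∧ a ≤ ω ^ γ := by
  obtain ⟨⟨γ, hγ⟩, hle⟩ := csInf_mem (s := {x : Ordinal | (∃ β : Ordinal, x = ω ^ β) ∧ a ≤ x})
    ⟨ω ^ a, ⟨a, rfl⟩, right_le_opow a one_lt_omega0⟩
  exact ⟨γ, hγ, hγ ▸ hle⟩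

lemma gammaOrd_add_one_le_mul_omega0 {a : Ordinal} (ha : a ≠ 0) : GammaOrd (a + 1) ≤ a * ω :=
  calc GammaOrd (a + 1) ≤ ω ^ (log ω a + 1) := csInf_le' ⟨⟨_, rfl⟩,
        Order.add_one_le_of_lt (lt_opow_of_log_lt one_lt_omega0 (lt_add_one _))⟩
    _ = ω ^ log ω a * ω := opow_add_one ω _
    _ ≤ a * ω := mul_le_mul_left (opow_log_le_self ω ha) ω

end GammaOrd

section Classification

variable {K L : Type*} [TopologicalSpace K] [CompactSpace K] [T2Space K] [Countable K] [Infinite K]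
  [TopologicalSpace L] [CompactSpace L] [T2Space L] [Countable L]

variable (K) in
lemma one_lt_cbHeight : 1 < cbHeight K := by
  rw [← nonempty_cbDeriv_iff, nonempty_iff_ne_empty, cbDeriv_one]
  exact fun hempty ↦ infinite_univ (finite_of_derivedSet_eq_empty hempty)

theorem cbHeight_lt_gammaOrd (T : C(K, ℝ) ≃L[ℝ] C(L, ℝ)) : cbHeight L < GammaOrd (cbHeight K) := by
  obtain ⟨γ, hγ, hK⟩ := exists_gammaOrd_eq_opow (cbHeight K)
  have hγ0 : γ ≠ 0 := by
    rintro rfl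
    exact (one_lt_cbHeight K).not_ge (hK.trans_eq (opow_zero ω))
  obtain ⟨c, hsys⟩ := (IsSeparatedSystem.evalCLM (L := L)).exists_comp_equiv T
  have hL := derivBound γ K (cbDeriv_eq_empty_iff.2 hK) L c _ hsys
  rw [hγ]
  exact cbHeight_lt_of_isSuccLimit (isSuccLimit_opow_left isSuccLimit_omega0 hγ0)
    (cbDeriv_eq_empty_iff.1 hL)

theorem posIso_of_cbHeight_lt_gammaOrd (hKL : cbHeight K ≤ cbHeight L)
    (hL : cbHeight L < GammaOrd (cbHeight K)) : PosIso K L := by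
  obtain ⟨a, ha, ⟨x, hx⟩, hfin⟩ := exists_cbHeight_eq_add_one K
  have ha1 : 1 ≤ a := Order.lt_add_one_iff.1 (ha ▸ one_lt_cbHeight K)
  have : Finite (cbDeriv K a) := hfin.to_subtype
  have hlt : cbHeight L < a * ω := hL.trans_le <|
    ha ▸ gammaOrd_add_one_le_mul_omega0 (Order.one_le_iff_pos.1 ha1).ne'
  exact (Wedge.posIso_of_finite (t := ⟨x, hx⟩)).trans <| posIso_of_cbDeriv_eq_singleton
    (Wedge.cbDeriv_eq_singleton ha1) ha1 ((ha ▸ lt_add_one a).trans_le hKL) hlt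

end Classification

/-- For infinite countable compact Hausdorff spaces `K`, `L` the following are
equivalent: (i) there is a positive (surjective) isomorphism `C(K) → C(L)`;
(ii) `C(K)` is linearly isomorphic to `C(L)` and `ht(K) ≤ ht(L)`;
(iii) `ht(K) ≤ ht(L) < Γ(ht(K))`. -/
theorem stmt_1 {K L : Type*} [TopologicalSpace K] [CompactSpace K] [T2Space K]
    [Countable K] [Infinite K]
    [TopologicalSpace L] [CompactSpace L] [T2Space L]
    [Countable L] [Infinite L] :
    ((∃ T : C(K, ℝ) ≃L[ℝ] C(L, ℝ), ∀ f : C(K, ℝ), 0 ≤ f → 0 ≤ T f) ↔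
      (Nonempty (C(K, ℝ) ≃L[ℝ] C(L, ℝ)) ∧ cbHeight K ≤ cbHeight L)) ∧
    ((Nonempty (C(K, ℝ) ≃L[ℝ] C(L, ℝ)) ∧ cbHeight K ≤ cbHeight L) ↔
      (cbHeight K ≤ cbHeight L ∧ cbHeight L < GammaOrd (cbHeight K))) := by
  have h12 (h : PosIso K L) : Nonempty (C(K, ℝ) ≃L[ℝ] C(L, ℝ)) ∧ cbHeight K ≤ cbHeight L :=
    ⟨⟨h.choose⟩, h.cbHeight_le⟩
  have h23 (h : Nonempty (C(K, ℝ) ≃L[ℝ] C(L, ℝ)) ∧ cbHeight K ≤ cbHeight L) :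
      cbHeight K ≤ cbHeight L ∧ cbHeight L < GammaOrd (cbHeight K) :=
    ⟨h.2, cbHeight_lt_gammaOrd h.1.some⟩
  have h31 (h : cbHeight K ≤ cbHeight L ∧ cbHeight L < GammaOrd (cbHeight K)) : PosIso K L :=
    posIso_of_cbHeight_lt_gammaOrd h.1 h.2
  exact ⟨⟨h12, h31 ∘ h23⟩, ⟨h23, h12 ∘ h31⟩⟩
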